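/- arXiv:2304.03340 — 4 statements merged into one kernel-verified Lean document; each statement's English description precedes it below -/
import Mathlib

section
/- For every X ∈ E, the map t ↦ F(t, X) is differentiable and satisfies ∂F/∂t (t, X) = D_x u(t, φ(t, X)) ∘ F(t, X) for all t (composition of continuous linear maps). -/
noncomputable section

local notation "E3" => EuclideanSpace ℝ (Fin 3)

/-!
Fix a time `t₀` and a label `X`, and write `D(t, Y) = φ(t, Y) - φ(t, X)` and
`A = D_x u(t₀, φ(t₀, X))`. A continuity argument gives `‖D(t, Y)‖ ≤ 2 ‖D(t₀, Y)‖` for `(t, Y)` near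
`(t₀, X)`. Hence `∂D/∂t = u(t, φ(t, Y)) - u(t, φ(t, X))` equals `A D(t₀, Y)` up to `o(D(t₀, Y))`,
and the mean value inequality in time yields
`D(t, Y) = D(t₀, Y) + (t - t₀) A D(t₀, Y) + o((t - t₀) (Y - X))` as `(t, Y) → (t₀, X)`.
Since the error is uniform in `Y`, taking derivatives at `Y = X` gives
`F(t) = F(t₀) + (t - t₀) A F(t₀) + o(t - t₀)` in operator norm.
-/

open Asymptotics Filter Function Set Topology

section MeanValue

variable {E H α : Type*} [NormedAddCommGroup E] [NormedSpace ℝ E] [NormedAddCommGroup H]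
  {l : Filter α}

theorem eventually_forall_segment {x₀ : E} {r : E × α → Prop}
    (h : ∀ᶠ p in 𝓝 x₀ ×ˢ l, r p) : ∀ᶠ p in 𝓝 x₀ ×ˢ l, ∀ x ∈ segment ℝ x₀ p.1, r (x, p.2) :=
  Eventually.segment_of_prod_nhds (r := fun p x => r (x, p.2)) tendsto_const_nhds tendsto_fst
    ((tendsto_snd.prodMk (tendsto_snd.comp tendsto_fst)).eventually h)

theorem isLittleO_sub_sub_of_hasFDerivAt {F : Type*} [NormedAddCommGroup F] [NormedSpace ℝ F]
    {f : α → E → F} {f' : α → E → E →L[ℝ] F} {A : E →L[ℝ] F} {x₀ : E}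
    (hf : ∀ᶠ p in l ×ˢ 𝓝 x₀, HasFDerivAt (f p.1) (f' p.1 p.2) p.2)
    (hf' : Tendsto (uncurry f') (l ×ˢ 𝓝 x₀) (𝓝 A)) :
    (fun p : α × E × E => f p.1 p.2.1 - f p.1 p.2.2 - A (p.2.1 - p.2.2))
      =o[l ×ˢ 𝓝 x₀ ×ˢ 𝓝 x₀] fun p => p.2.1 - p.2.2 := by
  refine isLittleO_iff.2 fun ε hε => ?_
  have hclose : ∀ᶠ p in l ×ˢ 𝓝 x₀, ‖f' p.1 p.2 - A‖ ≤ ε := by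
    filter_upwards [hf'.eventually (Metric.closedBall_mem_nhds A hε)] with p hp
    exact mem_closedBall_iff_norm.1 hp
  have hsegment := Eventually.segment_of_prod_nhds (f := l ×ˢ 𝓝 x₀ ×ˢ 𝓝 x₀)
    (r := fun p x => HasFDerivAt (f p.1) (f' p.1 x) x ∧ ‖f' p.1 x - A‖ ≤ ε)
    (tendsto_snd.comp tendsto_snd) (tendsto_fst.comp tendsto_snd)
    (((tendsto_fst.comp tendsto_fst).prodMk tendsto_snd).eventually (hf.and hclose))
  filter_upwards [hsegment] with p hp
  exact (convex_segment _ _).norm_image_sub_le_of_norm_hasFDerivWithin_le'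
    (fun x hx => (hp x hx).1.hasFDerivWithinAt) (fun x hx => (hp x hx).2)
    (left_mem_segment ..) (right_mem_segment ..)

variable [NormedSpace ℝ H] {t₀ : ℝ} {f f' : ℝ → α → E} {g : α → H}

theorem isBigOWith_sub_of_hasDerivAt {c : ℝ}
    (hf : ∀ᶠ p in 𝓝 t₀ ×ˢ l, HasDerivAt (f · p.2) (f' p.1 p.2) p.1)
    (hf' : IsBigOWith c (𝓝 t₀ ×ˢ l) (uncurry f') fun p => g p.2) :
    IsBigOWith c (𝓝 t₀ ×ˢ l) (fun p => f p.1 p.2 - f t₀ p.2) fun p => (p.1 - t₀) • g p.2 := by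
  refine .of_bound ?_
  filter_upwards [eventually_forall_segment (hf.and hf'.bound)] with p hp
  calc ‖f p.1 p.2 - f t₀ p.2‖ ≤ c * ‖g p.2‖ * ‖p.1 - t₀‖ :=
        (convex_segment t₀ p.1).norm_image_sub_le_of_norm_hasDerivWithin_le
          (fun s hs => (hp s hs).1.hasDerivWithinAt) (fun s hs => (hp s hs).2)
          (left_mem_segment ..) (right_mem_segment ..)
    _ = c * ‖(p.1 - t₀) • g p.2‖ := by rw [norm_smul]; ring

theorem isBigO_sub_of_hasDerivAt
    (hf : ∀ᶠ p in 𝓝 t₀ ×ˢ l, HasDerivAt (f · p.2) (f' p.1 p.2) p.1)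
    (hf' : uncurry f' =O[𝓝 t₀ ×ˢ l] fun p => g p.2) :
    (fun p => f p.1 p.2 - f t₀ p.2) =O[𝓝 t₀ ×ˢ l] fun p => (p.1 - t₀) • g p.2 :=
  let ⟨_, h⟩ := hf'.isBigOWith
  (isBigOWith_sub_of_hasDerivAt hf h).isBigO

theorem isLittleO_sub_of_hasDerivAt
    (hf : ∀ᶠ p in 𝓝 t₀ ×ˢ l, HasDerivAt (f · p.2) (f' p.1 p.2) p.1)
    (hf' : uncurry f' =o[𝓝 t₀ ×ˢ l] fun p => g p.2) :
    (fun p => f p.1 p.2 - f t₀ p.2) =o[𝓝 t₀ ×ˢ l] fun p => (p.1 - t₀) • g p.2 :=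
  .of_isBigOWith fun _ hc => isBigOWith_sub_of_hasDerivAt hf (hf'.forall_isBigOWith hc)

end MeanValue

section InterchangeOfDerivatives

variable {E G : Type*} [NormedAddCommGroup E] [NormedSpace ℝ E]
  [NormedAddCommGroup G] [NormedSpace ℝ G]

theorem hasDerivAt_of_isLittleO_sub {φ : ℝ → G → E} {ψ : G → E} {F : ℝ → G →L[ℝ] E}
    {B : G →L[ℝ] E} {t₀ : ℝ} {X : G} (hφ : ∀ᶠ t in 𝓝 t₀, HasFDerivAt (φ t) (F t) X)
    (hψ : HasFDerivAt ψ B X)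
    (h : (fun p : ℝ × G => φ p.1 p.2 - φ p.1 X - (φ t₀ p.2 - φ t₀ X) - (p.1 - t₀) • (ψ p.2 - ψ X))
      =o[𝓝 t₀ ×ˢ 𝓝 X] fun p => (p.1 - t₀) • (p.2 - X)) :
    HasDerivAt F B t₀ := by
  refine .of_isLittleO <| isLittleO_iff.2 fun ε hε => ?_
  filter_upwards [hφ, (isLittleO_iff.1 h hε).curry] with t ht hbound
  have hderiv := (ht.sub hφ.self_of_nhds).sub (hψ.const_smul (t - t₀))
  refine hderiv.le_of_lip' (by positivity) ?_
  filter_upwards [hbound] with Y hY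
  calc _ = ‖φ t Y - φ t X - (φ t₀ Y - φ t₀ X) - (t - t₀) • (ψ Y - ψ X)‖ := by
        congr 1; simp only [Pi.sub_apply, Pi.smul_apply]; module
    _ ≤ ε * ‖(t - t₀) • (Y - X)‖ := hY
    _ = ε * ‖t - t₀‖ * ‖Y - X‖ := by rw [norm_smul, mul_assoc]

end InterchangeOfDerivatives

section Trajectories

variable {E α : Type*} [NormedAddCommGroup E] [NormedSpace ℝ E]

theorem norm_le_two_mul_of_norm_deriv_le {f f' : ℝ → E} {t₀ t K r : ℝ} (hK : 0 ≤ K)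
    (hf : ∀ s ∈ segment ℝ t₀ t, HasDerivAt f (f' s) s)
    (hf' : ∀ s ∈ segment ℝ t₀ t, ‖f s‖ < r → ‖f' s‖ ≤ K * ‖f s‖)
    (hr : 2 * ‖f t₀‖ < r) (ht : 2 * (K * ‖t - t₀‖) < 1) : ‖f t‖ ≤ 2 * ‖f t₀‖ := by
  suffices hle : ∀ R ∈ Ioo (2 * ‖f t₀‖) r, ‖f t‖ ≤ R from
    ge_of_tendsto (tendsto_id.mono_left nhdsWithin_le_nhds)
      (mem_of_superset (Ioo_mem_nhdsGT hr) hle)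
  rintro R ⟨hR₀, hRr⟩
  have hR : 0 < R := (by positivity : 0 ≤ 2 * ‖f t₀‖).trans_lt hR₀
  let ℓ := AffineMap.lineMap (k := ℝ) t₀ t
  have hℓ : ∀ s ∈ Icc (0 : ℝ) 1, ℓ s ∈ segment ℝ t₀ t := fun s hs => by
    rw [segment_eq_image_lineMap]; exact mem_image_of_mem _ hs
  have hderiv : ∀ s ∈ Icc (0 : ℝ) 1, HasDerivAt (f ∘ ℓ) ((t - t₀) • f' (ℓ s)) s := fun s hs =>
    (hf _ (hℓ s hs)).scomp s AffineMap.hasDerivAt_lineMap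
  -- While `‖f‖ ≤ R < r`, the norm of `f ∘ ℓ` grows at a rate less than `R / 2`, so it cannot cross
  -- the fence `R / 2 * (1 + s)`.
  have hfence := image_norm_le_of_norm_deriv_right_lt_deriv_boundary
    (B := fun s => R / 2 * (1 + s)) (B' := fun _ => R / 2)
    (fun s hs => (hderiv s hs).continuousAt.continuousWithinAt)
    (fun s hs => (hderiv s (Ico_subset_Icc_self hs)).hasDerivWithinAt)
    (by simpa [ℓ] using (by linarith : ‖f t₀‖ ≤ R / 2))
    (fun s => by simpa using ((hasDerivAt_id s).const_add 1).const_mul (R / 2))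
    (fun s hs heq => by
      have hle : ‖f (ℓ s)‖ ≤ R := heq.trans_le (by nlinarith [hs.2])
      calc ‖(t - t₀) • f' (ℓ s)‖ = ‖t - t₀‖ * ‖f' (ℓ s)‖ := norm_smul ..
        _ ≤ ‖t - t₀‖ * (K * R) := by
            gcongr
            exact (hf' _ (hℓ s (Ico_subset_Icc_self hs)) (hle.trans_lt hRr)).trans (by gcongr)
        _ < R / 2 := by nlinarith)
    (right_mem_Icc.2 zero_le_one)
  simpa [ℓ, one_add_one_eq_two] using hfence

variable {l : Filter α} {u : ℝ → E → E} {φ : ℝ → α → E} {γ : ℝ → E} {t₀ : ℝ}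

theorem isBigO_sub_trajectory
    (hu : (fun p : ℝ × E × E => u p.1 p.2.1 - u p.1 p.2.2)
      =O[𝓝 t₀ ×ˢ 𝓝 (γ t₀) ×ˢ 𝓝 (γ t₀)] fun p => p.2.1 - p.2.2)
    (hφ : ∀ᶠ p in 𝓝 t₀ ×ˢ l, HasDerivAt (φ · p.2) (u p.1 (φ p.1 p.2)) p.1)
    (hγ : ∀ᶠ t in 𝓝 t₀, HasDerivAt γ (u t (γ t)) t)
    (hlim : Tendsto (φ t₀) l (𝓝 (γ t₀))) :
    (fun p => φ p.1 p.2 - γ p.1) =O[𝓝 t₀ ×ˢ l] fun p => φ t₀ p.2 - γ t₀ := by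
  obtain ⟨K, hK, hbound⟩ := hu.exists_nonneg
  have hγc : ContinuousAt γ t₀ := hγ.self_of_nhds.continuousAt
  obtain ⟨r, hr, hlip⟩ : ∃ r > 0, ∀ᶠ t in 𝓝 t₀, ∀ d, ‖d‖ < r →
      ‖u t (γ t + d) - u t (γ t)‖ ≤ K * ‖d‖ := by
    have hshift : Tendsto (fun q : ℝ × E => (q.1, γ q.1 + q.2, γ q.1)) (𝓝 t₀ ×ˢ 𝓝 0)
        (𝓝 t₀ ×ˢ 𝓝 (γ t₀) ×ˢ 𝓝 (γ t₀)) :=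
      have hγfst := hγc.tendsto.comp (tendsto_fst (g := 𝓝 (0 : E)))
      tendsto_fst.prodMk (.prodMk (by simpa using hγfst.add tendsto_snd) hγfst)
    obtain ⟨p, hp, r, hr, hpr⟩ :=
      Metric.eventually_prod_nhds_iff.1 (hshift.eventually hbound.bound)
    refine ⟨r, hr, hp.mono fun t ht d hd => ?_⟩
    simpa using hpr ht (mem_ball_zero_iff.2 hd)
  have hsmall : ∀ᶠ a in l, 2 * ‖φ t₀ a - γ t₀‖ < r :=
    ((hlim.sub_const (γ t₀)).norm.const_mul 2).eventually_lt_const (by simpa using hr)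
  have hshort : ∀ᶠ t in 𝓝 t₀, 2 * (K * ‖t - t₀‖) < 1 :=
    (by fun_prop : Continuous fun t => 2 * (K * ‖t - t₀‖)).continuousAt.eventually_lt_const
      (by simp)
  refine .of_bound 2 ?_
  filter_upwards [eventually_forall_segment (hφ.and ((hγ.and hlip).prod_inl l)),
    hsmall.prod_inr (𝓝 t₀), hshort.prod_inl l] with p hp hsmall hshort
  exact norm_le_two_mul_of_norm_deriv_le hK (f := fun s => φ s p.2 - γ s)
    (fun s hs => (hp s hs).1.sub (hp s hs).2.1)
    (fun s hs hsr => by simpa using (hp s hs).2.2 _ hsr) hsmall hshort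

theorem tendsto_trajectory
    (hu : (fun p : ℝ × E × E => u p.1 p.2.1 - u p.1 p.2.2)
      =O[𝓝 t₀ ×ˢ 𝓝 (γ t₀) ×ˢ 𝓝 (γ t₀)] fun p => p.2.1 - p.2.2)
    (hφ : ∀ᶠ p in 𝓝 t₀ ×ˢ l, HasDerivAt (φ · p.2) (u p.1 (φ p.1 p.2)) p.1)
    (hγ : ∀ᶠ t in 𝓝 t₀, HasDerivAt γ (u t (γ t)) t)
    (hlim : Tendsto (φ t₀) l (𝓝 (γ t₀))) :
    Tendsto (uncurry φ) (𝓝 t₀ ×ˢ l) (𝓝 (γ t₀)) := by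
  have hinit : Tendsto (fun p : ℝ × α => φ t₀ p.2 - γ t₀) (𝓝 t₀ ×ˢ l) (𝓝 0) :=
    (tendsto_sub_nhds_zero_iff.2 hlim).comp tendsto_snd
  have hγt := hγ.self_of_nhds.continuousAt.tendsto.comp (tendsto_fst (g := l))
  simpa [uncurry_def] using
    ((isBigO_sub_trajectory hu hφ hγ hlim).trans_tendsto hinit).add hγt

theorem isLittleO_sub_trajectory_sub {A : E →L[ℝ] E}
    (hu : (fun p : ℝ × E × E => u p.1 p.2.1 - u p.1 p.2.2 - A (p.2.1 - p.2.2))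
      =o[𝓝 t₀ ×ˢ 𝓝 (γ t₀) ×ˢ 𝓝 (γ t₀)] fun p => p.2.1 - p.2.2)
    (hφ : ∀ᶠ p in 𝓝 t₀ ×ˢ l, HasDerivAt (φ · p.2) (u p.1 (φ p.1 p.2)) p.1)
    (hγ : ∀ᶠ t in 𝓝 t₀, HasDerivAt γ (u t (γ t)) t)
    (hlim : Tendsto (φ t₀) l (𝓝 (γ t₀))) :
    (fun p => φ p.1 p.2 - γ p.1 - (φ t₀ p.2 - γ t₀) - (p.1 - t₀) • A (φ t₀ p.2 - γ t₀))
      =o[𝓝 t₀ ×ˢ l] fun p => (p.1 - t₀) • (φ t₀ p.2 - γ t₀) := by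
  let D : ℝ → α → E := fun t a => φ t a - γ t
  let v : ℝ → α → E := fun t a => u t (φ t a) - u t (γ t)
  have hlip : (fun p : ℝ × E × E => u p.1 p.2.1 - u p.1 p.2.2)
      =O[𝓝 t₀ ×ˢ 𝓝 (γ t₀) ×ˢ 𝓝 (γ t₀)] fun p => p.2.1 - p.2.2 := by
    simpa using hu.isBigO.add (A.isBigO_comp _ _)
  have hD : uncurry D =O[𝓝 t₀ ×ˢ l] fun p => D t₀ p.2 := isBigO_sub_trajectory hlip hφ hγ hlim
  have hDv : ∀ᶠ p in 𝓝 t₀ ×ˢ l, HasDerivAt (D · p.2) (v p.1 p.2) p.1 := by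
    filter_upwards [hφ, hγ.prod_inl l] with p hp hpγ using hp.sub hpγ
  have hpair : Tendsto (fun p : ℝ × α => (p.1, φ p.1 p.2, γ p.1)) (𝓝 t₀ ×ˢ l)
      (𝓝 t₀ ×ˢ 𝓝 (γ t₀) ×ˢ 𝓝 (γ t₀)) :=
    tendsto_fst.prodMk <| (tendsto_trajectory hlip hφ hγ hlim).prodMk <|
      hγ.self_of_nhds.continuousAt.tendsto.comp tendsto_fst
  have hv : uncurry v =O[𝓝 t₀ ×ˢ l] fun p => D t₀ p.2 :=
    (hlip.comp_tendsto hpair).trans hD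
  have hlin : (fun p => v p.1 p.2 - A (D p.1 p.2)) =o[𝓝 t₀ ×ˢ l] fun p => D t₀ p.2 :=
    (hu.comp_tendsto hpair).trans_isBigO hD
  have hDt : (fun p => D p.1 p.2 - D t₀ p.2) =o[𝓝 t₀ ×ˢ l] fun p => D t₀ p.2 := by
    have hshort : (fun p : ℝ × α => p.1 - t₀) =o[𝓝 t₀ ×ˢ l] fun _ => (1 : ℝ) :=
      (isLittleO_one_iff ℝ).2 ((tendsto_sub_nhds_zero_iff.2 tendsto_id).comp tendsto_fst)
    simpa using (isBigO_sub_of_hasDerivAt hDv hv).trans_isLittleO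
      (hshort.smul_isBigO (isBigO_refl (fun p : ℝ × α => D t₀ p.2) _))
  have hv' : uncurry (fun t a => v t a - A (D t₀ a)) =o[𝓝 t₀ ×ˢ l] fun p => D t₀ p.2 := by
    simpa [uncurry_def] using hlin.add ((A.isBigO_comp _ _).trans_isLittleO hDt)
  have hmean := isLittleO_sub_of_hasDerivAt
    (f := fun t a => D t a - (t - t₀) • A (D t₀ a))
    (hDv.mono fun p hp => hp.sub (by
      simpa using ((hasDerivAt_id p.1).sub_const t₀).smul_const (A (D t₀ p.2)))) hv'
  simpa [D, sub_right_comm] using hmean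

end Trajectories

section LinearizedEquation

variable {E G : Type*} [NormedAddCommGroup E] [NormedSpace ℝ E]
  [NormedAddCommGroup G] [NormedSpace ℝ G]

theorem continuous_uncurry_fderiv {T F : Type*} [NormedAddCommGroup T] [NormedSpace ℝ T]
    [NormedAddCommGroup F] [NormedSpace ℝ F] {u : T → E → F} (hu : ContDiff ℝ 1 (uncurry u)) :
    Continuous (uncurry fun t => fderiv ℝ (u t)) :=
  (ContDiff.fderiv (f := fun p : T × E => u p.1) (m := 1) (n := 0)
    (hu.comp (contDiff_fst.fst.prodMk contDiff_snd)) contDiff_snd (by simp)).continuous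

theorem tangent_map_time_derivative_general {u : ℝ → E → E} {u' : ℝ → E → E →L[ℝ] E}
    {φ : ℝ → G → E} {F : ℝ → G →L[ℝ] E} {t₀ : ℝ} {X : G}
    (hu : ∀ᶠ p in 𝓝 (t₀, φ t₀ X), HasFDerivAt (u p.1) (u' p.1 p.2) p.2)
    (hu' : ContinuousAt (uncurry u') (t₀, φ t₀ X))
    (hφ : ∀ᶠ p in 𝓝 (t₀, X), HasDerivAt (φ · p.2) (u p.1 (φ p.1 p.2)) p.1)
    (hF : ∀ᶠ t in 𝓝 t₀, HasFDerivAt (φ t) (F t) X) :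
    HasDerivAt F ((u' t₀ (φ t₀ X)).comp (F t₀)) t₀ := by
  rw [nhds_prod_eq] at hu hφ
  rw [ContinuousAt, nhds_prod_eq] at hu'
  have hφX : ∀ᶠ t in 𝓝 t₀, HasDerivAt (φ · X) (u t (φ t X)) t :=
    hφ.curry.mono fun _ ht => ht.self_of_nhds
  have hF₀ := hF.self_of_nhds
  refine hasDerivAt_of_isLittleO_sub hF ((u' t₀ (φ t₀ X)).hasFDerivAt.comp X hF₀) ?_
  have hlin := isLittleO_sub_trajectory_sub (isLittleO_sub_sub_of_hasFDerivAt hu hu') hφ hφX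
    hF₀.continuousAt
  have hlip : (fun p : ℝ × G => φ t₀ p.2 - φ t₀ X) =O[𝓝 t₀ ×ˢ 𝓝 X] fun p => p.2 - X :=
    hF₀.isBigO_sub.comp_tendsto tendsto_snd
  simpa using hlin.trans_isBigO ((isBigO_refl _ _).smul hlip)

end LinearizedEquation

/-- `∂F/∂t (t, X) = D_x u(t, φ(t, X)) ∘ F(t, X)`. -/
theorem tangent_map_time_derivative
    (u φ : ℝ → E3 → E3)
    (F : ℝ → E3 → (E3 ≃L[ℝ] E3))
    (hu : ContDiff ℝ (⊤ : ℕ∞) (Function.uncurry u))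
    (hφ0 : ∀ X, φ 0 X = X)
    (hφt : ∀ t X, HasDerivAt (fun τ => φ τ X) (u t (φ t X)) t)
    (hφsmooth : ∀ t, ContDiff ℝ (⊤ : ℕ∞) (φ t))
    (hφbij : ∀ t, Function.Bijective (φ t))
    (hφinv : ∀ t, ContDiff ℝ (⊤ : ℕ∞) (Function.invFun (φ t)))
    (hF : ∀ t X, (F t X : E3 →L[ℝ] E3) = fderiv ℝ (φ t) X) :
    ∀ (X : E3) (t : ℝ),
      HasDerivAt (fun τ => (F τ X : E3 →L[ℝ] E3))
        ((fderiv ℝ (u t) (φ t X)).comp (F t X : E3 →L[ℝ] E3)) t := by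
  intro X t
  have hux : ∀ p : ℝ × E3, HasFDerivAt (u p.1) (fderiv ℝ (u p.1) p.2) p.2 := fun p =>
    ((hu.comp (contDiff_prodMk_right p.1)).differentiable (by simp) p.2).hasFDerivAt
  have hφx : ∀ τ, HasFDerivAt (φ τ) (F τ X : E3 →L[ℝ] E3) X := fun τ =>
    hF τ X ▸ ((hφsmooth τ).differentiable (by simp) X).hasFDerivAt
  exact tangent_map_time_derivative_general (.of_forall hux)
    (continuous_uncurry_fderiv (hu.of_le (by exact_mod_cast le_top))).continuousAt
    (.of_forall fun p => hφt p.1 p.2) (.of_forall hφx)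
end
end

section
/- Let C : ℝ × E → (E →L[ℝ] ℝ) be a C¹ field of linear forms and define its Lie derivative d_L C (t, x) := ∂C/∂t(t, x) + D_x C(t, x)(u(t, x)) + C(t, x) ∘ D_x u(t, x). Then d_L C ≡ 0 if and only if C(t, φ(t, X)) ∘ F(t, X) = C(0, X) for all (t, X); i.e. a form field is moving with the fluid if and only if its pull-back by the tangent map F to the reference space is independent of time. -/
noncomputable section

local notation "E3" => EuclideanSpace ℝ (Fin 3)

/-!
Along a trajectory `s ↦ φ(s, X)` the tangent map solves the linearised equation
`∂F/∂t = (D_x u) ∘ F`, so the chain and product rules give `∂/∂t (C ∘ F) = (d_L C) ∘ F`. The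
pull-back is therefore constant in time exactly when `d_L C` vanishes at all `φ(t, X)`, that is,
everywhere, because `φ(t, ·)` and `F` are surjective.

A priori `F` has no regularity in time, so the linearised equation cannot be read off from the
symmetry of mixed derivatives. The difference quotients `h⁻¹ (φ(s, X + h v) - φ(s, X))` converge
to `F v`, and Grönwall's argument bounds their time derivatives uniformly in `h`. The limit is
then Lipschitz in time, and dominated convergence identifies its derivative.
-/

open Set Filter Function Metric
open scoped Topology NNReal

lemma exists_lipschitzOnWith_closedBall_of_locallyLipschitz_uncurry {α β γ : Type*}
    [PseudoEMetricSpace α] [PseudoMetricSpace β] [PseudoEMetricSpace γ] {f : α → β → γ}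
    (hf : LocallyLipschitz (uncurry f)) {c : α → β} {K : Set α} (hK : IsCompact K)
    (hc : ContinuousOn c K) :
    ∃ L : ℝ≥0, ∃ ε > 0, ∀ s ∈ K, LipschitzOnWith L (f s) (closedBall (c s) ε) := by
  refine hK.induction_on (p := fun S => ∃ L : ℝ≥0, ∃ ε > 0, ∀ s ∈ S,
    LipschitzOnWith L (f s) (closedBall (c s) ε)) ⟨0, 1, one_pos, by simp⟩
    (fun S T hST ⟨L, ε, hε, h⟩ => ⟨L, ε, hε, fun s hs => h s (hST hs)⟩) ?union ?nhds
  case union =>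
    rintro S T ⟨L, ε, hε, hS⟩ ⟨L', ε', hε', hT⟩
    refine ⟨max L L', min ε ε', lt_min hε hε', ?_⟩
    rintro s (hs | hs)
    · exact ((hS s hs).mono (closedBall_subset_closedBall (min_le_left _ _))).weaken
        (le_max_left _ _)
    · exact ((hT s hs).mono (closedBall_subset_closedBall (min_le_right _ _))).weaken
        (le_max_right _ _)
  case nhds =>
    intro s hs
    obtain ⟨L, U, hU, hL⟩ := hf (s, c s)
    obtain ⟨A, hA, B, hB, hAB⟩ := mem_nhds_prod_iff.1 hU
    obtain ⟨ε, hε, hεB⟩ := Metric.mem_nhds_iff.1 hB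
    refine ⟨A ∩ c ⁻¹' ball (c s) (ε / 2), inter_mem (mem_nhdsWithin_of_mem_nhds hA)
      (hc s hs (ball_mem_nhds _ (half_pos hε))), L, ε / 2, half_pos hε, ?_⟩
    rintro s' ⟨hs'A, hs'⟩
    have hmaps : MapsTo (Prod.mk s') (closedBall (c s') (ε / 2)) U := fun y hy =>
      hAB ⟨hs'A, hεB (mem_ball.2 (by
        linarith [dist_triangle y (c s') (c s), mem_closedBall.1 hy, mem_ball.1 hs']))⟩
    simpa [comp_def] using hL.comp (LipschitzWith.prodMk_left s').lipschitzOnWith hmaps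

section

variable {E : Type*} [NormedAddCommGroup E] [NormedSpace ℝ E]

/- The distance cannot cross the barrier `δ * exp ((L + 1) * (t - a))`: where the two are equal, `g`
is still in the tube, and there the distance grows at rate at most `L < L + 1`. -/
lemma dist_le_of_isIntegralCurveOn_of_lipschitzOnWith_closedBall {v : ℝ → E → E} {f g : ℝ → E}
    {a b δ ε : ℝ} {L : ℝ≥0} (hv : ∀ t ∈ Icc a b, LipschitzOnWith L (v t) (closedBall (f t) ε))
    (hf : IsIntegralCurveOn f v (Icc a b)) (hg : IsIntegralCurveOn g v (Icc a b)) (hδ : 0 < δ)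
    (ha : dist (g a) (f a) ≤ δ) (hε : δ * Real.exp ((L + 1) * (b - a)) ≤ ε) :
    ∀ t ∈ Icc a b, dist (g t) (f t) ≤ δ * Real.exp ((L + 1) * (t - a)) := by
  simp only [dist_eq_norm] at ha ⊢
  refine image_norm_le_of_norm_deriv_right_lt_deriv_boundary (f' := fun t => v t (g t) - v t (f t))
    (B' := fun t => δ * (Real.exp ((L + 1) * (t - a)) * (L + 1)))
    (hg.continuousOn.sub hf.continuousOn)
    (fun t ht => ((hg t (Ico_subset_Icc_self ht)).sub
      (hf t (Ico_subset_Icc_self ht))).mono_of_mem_nhdsWithin (Icc_mem_nhdsGE_of_mem ht))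
    (by simpa using ha)
    (fun t => by
      simpa using ((((hasDerivAt_id t).sub_const a).const_mul (L + 1 : ℝ)).exp).const_mul δ)
    fun t ht (heq : ‖g t - f t‖ = _) => ?_
  have htab := Ico_subset_Icc_self ht
  have hpos : 0 < δ * Real.exp ((L + 1) * (t - a)) := by positivity
  have hle : δ * Real.exp ((L + 1) * (t - a)) ≤ ε := by
    refine le_trans ?_ hε
    gcongr
    exact htab.2
  have hmem : g t ∈ closedBall (f t) ε := by
    rw [mem_closedBall, dist_eq_norm, heq]
    exact hle
  calc ‖v t (g t) - v t (f t)‖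
      ≤ L * ‖g t - f t‖ :=
        (hv t htab).norm_sub_le hmem (mem_closedBall_self (hpos.le.trans hle))
    _ = L * (δ * Real.exp ((L + 1) * (t - a))) := by rw [heq]
    _ < δ * (Real.exp ((L + 1) * (t - a)) * (L + 1)) := by linarith

section LimitOfDerivatives

variable {ι : Type*} {l : Filter ι} [l.NeBot] {f f' : ι → ℝ → E} {F : ℝ → E}

lemma lipschitzOnWith_of_tendsto_of_norm_deriv_le {s : Set ℝ} (hs : Convex ℝ s) {M : ℝ≥0}
    (hf : ∀ i, ∀ x ∈ s, HasDerivWithinAt (f i) (f' i x) s x)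
    (hbound : ∀ᶠ i in l, ∀ x ∈ s, ‖f' i x‖ ≤ M)
    (hF : ∀ x, Tendsto (f · x) l (𝓝 (F x))) : LipschitzOnWith M F s :=
  (isClosed_setOfPred_lipschitzOnWith M s).mem_of_tendsto (tendsto_pi_nhds.2 hF) <|
    hbound.mono fun i hi => hs.lipschitzOnWith_of_nnnorm_hasDerivWithin_le (hf i) hi

lemma hasDerivAt_of_tendsto_of_norm_deriv_le [CompleteSpace E] [l.IsCountablyGenerated]
    {G : ℝ → E} {a b M : ℝ} (hf : ∀ i, ∀ x ∈ Icc a b, HasDerivAt (f i) (f' i x) x)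
    (hf' : ∀ i, ContinuousOn (f' i) (Icc a b)) (hbound : ∀ᶠ i in l, ∀ x ∈ Icc a b, ‖f' i x‖ ≤ M)
    (hF : ∀ x ∈ Icc a b, Tendsto (f · x) l (𝓝 (F x)))
    (hG : ∀ x ∈ Icc a b, Tendsto (f' · x) l (𝓝 (G x)))
    (hGc : ContinuousOn G (Icc a b)) {t : ℝ} (ht : t ∈ Ioo a b) : HasDerivAt F (G t) t := by
  have hab : a ≤ b := (ht.1.trans ht.2).le
  have huIcc : ∀ x ∈ Icc a b, uIcc a x ⊆ Icc a b := fun x hx =>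
    uIcc_subset_Icc (left_mem_Icc.2 hab) hx
  have hint : ∀ x ∈ Icc a b, F x = F a + ∫ s in a..x, G s := by
    intro x hx
    have hlim : Tendsto (fun i => ∫ s in a..x, f' i s) l (𝓝 (∫ s in a..x, G s)) :=
      intervalIntegral.tendsto_integral_filter_of_dominated_convergence (fun _ => M)
        (.of_forall fun i =>
          ((hf' i).mono (huIcc x hx)).intervalIntegrable.def'.aestronglyMeasurable)
        (hbound.mono fun i hi => .of_forall fun s hs => hi s (huIcc x hx (uIoc_subset_uIcc hs)))
        intervalIntegrable_const
        (.of_forall fun s hs => hG s (huIcc x hx (uIoc_subset_uIcc hs)))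
    have hFTC : ∀ i, ∫ s in a..x, f' i s = f i x - f i a := fun i =>
      intervalIntegral.integral_eq_sub_of_hasDerivAt (fun s hs => hf i s (huIcc x hx hs))
        ((hf' i).mono (huIcc x hx)).intervalIntegrable
    simp only [hFTC] at hlim
    rw [tendsto_nhds_unique hlim ((hF x hx).sub (hF a (left_mem_Icc.2 hab))), add_sub_cancel]
  have hnhds : Icc a b ∈ 𝓝 t := Icc_mem_nhds ht.1 ht.2
  have hderiv : HasDerivAt (fun x => ∫ s in a..x, G s) (G t) t :=
    intervalIntegral.integral_hasDerivAt_right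
      (hGc.mono (huIcc t (Ioo_subset_Icc_self ht))).intervalIntegrable
      ((hGc.mono Ioo_subset_Icc_self).stronglyMeasurableAtFilter isOpen_Ioo t ht)
      (hGc.continuousAt hnhds)
  exact (hderiv.const_add (F a)).congr_of_eventuallyEq (mem_of_superset hnhds hint)

end LimitOfDerivatives

/-- `φ` is the flow of the time-dependent velocity field `u`: the trajectory `φ · X` is the integral
curve of `u` that starts at `X` at time `0`. It is assumed to be defined for all times. -/
structure IsFlow (φ u : ℝ → E → E) : Prop where
  zero_apply : ∀ X, φ 0 X = X
  isIntegralCurve : ∀ X, IsIntegralCurve (φ · X) u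

namespace IsFlow

variable {u φ : ℝ → E → E}

lemma neg_time (hφ : IsFlow φ u) : IsFlow (fun t => φ (-t)) (fun t => -u (-t)) where
  zero_apply X := by simp [hφ.zero_apply]
  isIntegralCurve X t := by
    simpa [comp_def] using (hφ.isIntegralCurve X (-t)).scomp t (hasDerivAt_neg t)

lemma exists_dist_le_Icc_zero (hφ : IsFlow φ u) (hu : LocallyLipschitz (uncurry u)) (X : E)
    (T : ℝ) :
    ∃ C, ∀ᶠ Y in 𝓝 X, ∀ s ∈ Icc 0 T, dist (φ s Y) (φ s X) ≤ C * dist Y X := by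
  obtain ⟨L, ε, hε, hL⟩ := exists_lipschitzOnWith_closedBall_of_locallyLipschitz_uncurry hu
    (isCompact_Icc (a := 0) (b := T)) (hφ.isIntegralCurve X).continuous.continuousOn
  have hsmall : ∀ᶠ Y in 𝓝 X, dist Y X * Real.exp ((L + 1) * (T - 0)) < ε := by
    have hcont : Continuous fun Y : E => dist Y X * Real.exp ((L + 1) * (T - 0)) := by fun_prop
    exact hcont.continuousAt.eventually_lt continuousAt_const (by simpa using hε)
  refine ⟨Real.exp ((L + 1) * T), hsmall.mono fun Y hY s hs => ?_⟩
  rcases eq_or_ne Y X with rfl | hYX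
  · simp
  calc dist (φ s Y) (φ s X)
      ≤ dist Y X * Real.exp ((L + 1) * (s - 0)) :=
        dist_le_of_isIntegralCurveOn_of_lipschitzOnWith_closedBall hL
          ((hφ.isIntegralCurve X).isIntegralCurveOn _) ((hφ.isIntegralCurve Y).isIntegralCurveOn _)
          (dist_pos.2 hYX) (by simp [hφ.zero_apply]) hY.le s hs
    _ ≤ Real.exp ((L + 1) * T) * dist Y X := by
        rw [mul_comm, sub_zero]
        gcongr
        exact hs.2

lemma exists_dist_le (hφ : IsFlow φ u) (hu : LocallyLipschitz (uncurry u)) (X : E) (T : ℝ) :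
    ∃ C, ∀ᶠ Y in 𝓝 X, ∀ s ∈ Icc (-T) T, dist (φ s Y) (φ s X) ≤ C * dist Y X := by
  have hu_neg : LocallyLipschitz (uncurry fun t => -u (-t)) :=
    (hu.comp ((LipschitzWith.prod_fst.neg.prodMk LipschitzWith.prod_snd).locallyLipschitz)).neg
  obtain ⟨C, hC⟩ := hφ.exists_dist_le_Icc_zero hu X T
  obtain ⟨C', hC'⟩ := hφ.neg_time.exists_dist_le_Icc_zero hu_neg X T
  refine ⟨max C C', ?_⟩
  filter_upwards [hC, hC'] with Y hY hY' s hs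
  rcases le_total 0 s with h0 | h0
  · exact (hY s ⟨h0, hs.2⟩).trans (by gcongr; exact le_max_left _ _)
  · have := hY' (-s) ⟨neg_nonneg.2 h0, neg_le.1 hs.1⟩
    rw [neg_neg] at this
    exact this.trans (by gcongr; exact le_max_right _ _)

lemma exists_dist_velocity_le (hφ : IsFlow φ u) (hu : LocallyLipschitz (uncurry u)) (X : E)
    (T : ℝ) :
    ∃ M, ∀ᶠ Y in 𝓝 X, ∀ s ∈ Icc (-T) T, dist (u s (φ s Y)) (u s (φ s X)) ≤ M * dist Y X := by
  obtain ⟨L, ε, hε, hL⟩ := exists_lipschitzOnWith_closedBall_of_locallyLipschitz_uncurry hu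
    (isCompact_Icc (a := -T) (b := T)) (hφ.isIntegralCurve X).continuous.continuousOn
  obtain ⟨C, hC⟩ := hφ.exists_dist_le hu X T
  have hsmall : ∀ᶠ Y in 𝓝 X, C * dist Y X < ε := by
    have hcont : Continuous fun Y : E => C * dist Y X := by fun_prop
    exact hcont.continuousAt.eventually_lt continuousAt_const (by simpa using hε)
  refine ⟨L * C, ?_⟩
  filter_upwards [hC, hsmall] with Y hY hYε s hs
  calc dist (u s (φ s Y)) (u s (φ s X))
      ≤ L * dist (φ s Y) (φ s X) :=
        (hL s hs).dist_le_mul _ ((hY s hs).trans hYε.le) _ (mem_closedBall_self hε.le)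
    _ ≤ L * (C * dist Y X) := by gcongr; exact hY s hs
    _ = L * C * dist Y X := (mul_assoc _ _ _).symm

lemma exists_norm_slope_velocity_le (hφ : IsFlow φ u) (hu : LocallyLipschitz (uncurry u))
    (X v : E) (T : ℝ) :
    ∃ M : ℝ≥0, ∀ᶠ h in 𝓝[≠] (0 : ℝ), ∀ s ∈ Icc (-T) T,
      ‖h⁻¹ • (u s (φ s (X + h • v)) - u s (φ s X))‖ ≤ M := by
  obtain ⟨M, hM⟩ := hφ.exists_dist_velocity_le hu X T
  have hto : Tendsto (fun h : ℝ => X + h • v) (𝓝[≠] 0) (𝓝 X) := by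
    have hcont : Continuous fun h : ℝ => X + h • v := by fun_prop
    simpa using (hcont.tendsto 0).mono_left nhdsWithin_le_nhds
  refine ⟨(M * ‖v‖).toNNReal, ?_⟩
  filter_upwards [hto.eventually hM, self_mem_nhdsWithin] with h hh (h0 : h ≠ 0) s hs
  refine le_trans ?_ (Real.le_coe_toNNReal _)
  calc ‖h⁻¹ • (u s (φ s (X + h • v)) - u s (φ s X))‖
      = |h|⁻¹ * dist (u s (φ s (X + h • v))) (u s (φ s X)) := by
        rw [norm_smul, norm_inv, Real.norm_eq_abs, dist_eq_norm]
    _ ≤ |h|⁻¹ * (M * dist (X + h • v) X) := by gcongr; exact hh s hs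
    _ = M * ‖v‖ := by
        rw [dist_eq_norm, add_sub_cancel_left, norm_smul, Real.norm_eq_abs]
        field_simp [abs_ne_zero.2 h0]

theorem hasDerivAt_fderiv_apply [CompleteSpace E] (hφ : IsFlow φ u)
    (hu : ContDiff ℝ 1 (uncurry u)) {X : E} {F : ℝ → E →L[ℝ] E}
    (hF : ∀ s, HasFDerivAt (φ s) (F s) X) (v : E) (t : ℝ) :
    HasDerivAt (fun s => F s v) (fderiv ℝ (u t) (φ t X) (F t v)) t := by
  have hφc : ∀ Y, Continuous (φ · Y) := fun Y => (hφ.isIntegralCurve Y).continuous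
  have hvelocity : ∀ Y, Continuous fun s => u s (φ s Y) := fun Y =>
    hu.continuous.comp (continuous_id.prodMk (hφc Y))
  have hslope : ∀ s, Tendsto (fun h : ℝ => h⁻¹ • (φ s (X + h • v) - φ s X)) (𝓝[≠] 0)
      (𝓝 (F s v)) := fun s => ((hF s).hasLineDerivAt v).tendsto_slope_zero
  have hslope_deriv : ∀ (h s : ℝ), HasDerivAt (fun s => h⁻¹ • (φ s (X + h • v) - φ s X))
      (h⁻¹ • (u s (φ s (X + h • v)) - u s (φ s X))) s := fun h s =>
    ((hφ.isIntegralCurve _ s).sub (hφ.isIntegralCurve X s)).const_smul h⁻¹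
  have hslope_velocity : ∀ s, Tendsto
      (fun h : ℝ => h⁻¹ • (u s (φ s (X + h • v)) - u s (φ s X))) (𝓝[≠] 0)
      (𝓝 (fderiv ℝ (u s) (φ s X) (F s v))) := fun s =>
    (((hu.comp (contDiff_prodMk_right s)).differentiable one_ne_zero (φ s X)).hasFDerivAt.comp X
      (hF s)).hasLineDerivAt v |>.tendsto_slope_zero
  obtain ⟨M, hM⟩ := hφ.exists_norm_slope_velocity_le hu.locallyLipschitz X v (|t| + 1)
  have hFc : ContinuousOn (fun s => F s v) (Icc (-(|t| + 1)) (|t| + 1)) :=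
    (lipschitzOnWith_of_tendsto_of_norm_deriv_le (convex_Icc _ _)
      (fun h s _ => (hslope_deriv h s).hasDerivWithinAt) hM hslope).continuousOn
  exact hasDerivAt_of_tendsto_of_norm_deriv_le (fun h s _ => hslope_deriv h s)
    (fun h => (((hvelocity _).sub (hvelocity X)).const_smul h⁻¹).continuousOn) hM
    (fun s _ => hslope s) (fun s _ => hslope_velocity s)
    ((Continuous.fderiv_one hu (hφc X)).continuousOn.clm_apply hFc)
    (abs_lt.1 (lt_add_one |t|))

end IsFlow

variable {G : Type*} [NormedAddCommGroup G] [NormedSpace ℝ G]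

/-- The Lie derivative along the velocity field `u` of a time-dependent field `C` of linear forms,
here allowed to take values in any normed space. -/
def formLieDeriv (u : ℝ → E → E) (C : ℝ → E → E →L[ℝ] G) (t : ℝ) (x : E) : E →L[ℝ] G :=
  deriv (fun τ => C τ x) t + fderiv ℝ (C t) x (u t x) + (C t x).comp (fderiv ℝ (u t) x)

lemma hasDerivAt_uncurry_comp {C : ℝ → E → G} {γ : ℝ → E} {γ' : E} {t : ℝ}
    (hC : DifferentiableAt ℝ (uncurry C) (t, γ t)) (hγ : HasDerivAt γ γ' t) :
    HasDerivAt (fun τ => C τ (γ τ)) (deriv (fun τ => C τ (γ t)) t + fderiv ℝ (C t) (γ t) γ') t := by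
  set D := fderiv ℝ (uncurry C) (t, γ t)
  have hD : HasFDerivAt (uncurry C) D (t, γ t) := hC.hasFDerivAt
  have htime : HasDerivAt (fun τ => C τ (γ t)) (D (1, 0)) t :=
    hD.comp_hasDerivAt (f := fun τ => (τ, γ t)) t ((hasDerivAt_id t).prodMk (hasDerivAt_const t _))
  have hspace : HasFDerivAt (C t) (D.comp (.inr ℝ ℝ E)) (γ t) :=
    hD.comp (γ t) (hasFDerivAt_prodMk_right t _)
  have hcurve : HasDerivAt (fun τ => C τ (γ τ)) (D (1, γ')) t :=
    hD.comp_hasDerivAt (f := fun τ => (τ, γ τ)) t ((hasDerivAt_id t).prodMk hγ)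
  refine hcurve.congr_deriv ?_
  rw [htime.deriv, hspace.fderiv, ContinuousLinearMap.comp_apply, ContinuousLinearMap.inr_apply,
    ← map_add, Prod.mk_add_mk, add_zero, zero_add]

theorem IsFlow.hasDerivAt_pullback_apply [CompleteSpace E] {u φ : ℝ → E → E} (hφ : IsFlow φ u)
    (hu : ContDiff ℝ 1 (uncurry u)) {X : E} {F : ℝ → E →L[ℝ] E}
    (hF : ∀ s, HasFDerivAt (φ s) (F s) X) {C : ℝ → E → E →L[ℝ] G} {t : ℝ}
    (hC : DifferentiableAt ℝ (uncurry C) (t, φ t X)) (v : E) :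
    HasDerivAt (fun τ => C τ (φ τ X) (F τ v)) (formLieDeriv u C t (φ t X) (F t v)) t := by
  have hform : HasDerivAt (fun τ => C τ (φ τ X))
      (deriv (fun τ => C τ (φ t X)) t + fderiv ℝ (C t) (φ t X) (u t (φ t X))) t :=
    hasDerivAt_uncurry_comp (γ := fun τ => φ τ X) hC (hφ.isIntegralCurve X t)
  refine (hform.clm_apply (hφ.hasDerivAt_fderiv_apply hu hF v t)).congr_deriv ?_
  simp only [formLieDeriv, add_apply, ContinuousLinearMap.comp_apply]

theorem form_field_moving_with_fluid_iff_general [CompleteSpace E] {u φ : ℝ → E → E}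
    {F : ℝ → E → E →L[ℝ] E} {C : ℝ → E → E →L[ℝ] G} (hu : ContDiff ℝ 1 (uncurry u))
    (hφ : IsFlow φ u) (hφsurj : ∀ t, Surjective (φ t))
    (hF : ∀ t X, HasFDerivAt (φ t) (F t X) X) (hFsurj : ∀ t X, Surjective (F t X))
    (hC : Differentiable ℝ (uncurry C)) :
    (∀ t x, formLieDeriv u C t x = 0) ↔ ∀ t X, (C t (φ t X)).comp (F t X) = C 0 X := by
  have hderiv : ∀ t X v, HasDerivAt (fun τ => C τ (φ τ X) (F τ X v))
      (formLieDeriv u C t (φ t X) (F t X v)) t := fun t X v =>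
    hφ.hasDerivAt_pullback_apply hu (hF · X) (hC _) v
  constructor
  · intro hLie t X
    have hF0 : F 0 X = .id ℝ E :=
      (hF 0 X).unique ((hasFDerivAt_id X).congr_of_eventuallyEq (.of_forall hφ.zero_apply))
    ext v
    have hconst : C t (φ t X) (F t X v) = C 0 (φ 0 X) (F 0 X v) :=
      is_const_of_deriv_eq_zero (fun τ => (hderiv τ X v).differentiableAt)
        (fun τ => by rw [(hderiv τ X v).deriv, hLie, zero_apply]) t 0
    simpa [hF0, hφ.zero_apply] using hconst
  · intro hpull t x
    obtain ⟨X, rfl⟩ := hφsurj t x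
    ext w
    obtain ⟨v, rfl⟩ := hFsurj t X w
    have hconst : (fun τ => C τ (φ τ X) (F τ X v)) = fun _ => C 0 X v :=
      funext fun τ => DFunLike.congr_fun (hpull τ X) v
    exact (hderiv t X v).unique (hconst ▸ hasDerivAt_const t _)

end

/-- A form field is moving with the fluid (zero Lie derivative)
iff its pull-back by the tangent map `F` is independent of time. -/
theorem form_field_moving_with_fluid_iff
    (u φ : ℝ → E3 → E3)
    (F : ℝ → E3 → (E3 ≃L[ℝ] E3))
    (hu : ContDiff ℝ (⊤ : ℕ∞) (Function.uncurry u))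
    (hφ0 : ∀ X, φ 0 X = X)
    (hφt : ∀ t X, HasDerivAt (fun τ => φ τ X) (u t (φ t X)) t)
    (hφsmooth : ∀ t, ContDiff ℝ (⊤ : ℕ∞) (φ t))
    (hφbij : ∀ t, Function.Bijective (φ t))
    (hφinv : ∀ t, ContDiff ℝ (⊤ : ℕ∞) (Function.invFun (φ t)))
    (hF : ∀ t X, (F t X : E3 →L[ℝ] E3) = fderiv ℝ (φ t) X)
    (C : ℝ → E3 → (E3 →L[ℝ] ℝ))
    (hC : ContDiff ℝ 1 (Function.uncurry C)) :
    (∀ t x, deriv (fun τ => C τ x) t + fderiv ℝ (C t) x (u t x)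
        + (C t x).comp (fderiv ℝ (u t) x) = 0) ↔
      (∀ t X, (C t (φ t X)).comp (F t X : E3 →L[ℝ] E3) = C 0 X) :=
  form_field_moving_with_fluid_iff_general (hu.of_le (by exact_mod_cast le_top))
    ⟨hφ0, fun X t => hφt t X⟩ (fun t => (hφbij t).surjective)
    (fun t X => hF t X ▸ ((hφsmooth t).differentiable (by simp) X).hasFDerivAt)
    (fun t X => (F t X).surjective) (hC.differentiable one_ne_zero)
end
end

section
/- Let W : ℝ × E → E be C¹ and define its 2-form Lie derivative d_L² W (t, x) := ∂W/∂t(t, x) + D_x W(t, x)(u(t, x)) + (div u)(t, x) · W(t, x) − D_x u(t, x)(W(t, x)). Then d_L² W ≡ 0 if and only if (det F(t, X)) · W(t, φ(t, X)) = F(t, X)(W(0, X)) for all (t, X), where det F(t, X) denotes the determinant of the linear map F(t, X); i.e. the 2-form det(W, ·, ·) is moving with the fluid if and only if W = F W₀ / det F. -/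
noncomputable section

local notation "E3" => EuclideanSpace ℝ (Fin 3)

/-- divergence of a vector field: trace of its Fréchet derivative. -/
def divv (w : E3 → E3) (x : E3) : ℝ :=
  LinearMap.trace ℝ E3 (fderiv ℝ w x : E3 →ₗ[ℝ] E3)

/-!
Along a trajectory `t ↦ φ t X` of `u`, the deformation gradient solves the linearised equation
`∂ₜ F = Du ∘ F`, hence `∂ₜ det F = div u * det F` (Liouville), and the product rule gives
`∂ₜ (det F • W) = Du (det F • W) + det F • d_L² W`. So `det F • W` and `F W₀`, which agree at
`t = 0`, solve the same linear equation up to the forcing `det F • d_L² W`; they coincide iff the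
forcing vanishes, and `det F` never does.

The equation for `F` is obtained without the smoothness of flows in the initial condition: by
Grönwall, the difference quotients of `φ t` at `X` are approximate solutions of the linearised
equation with uniformly small errors, and limits of such approximate solutions are solutions.
-/

open Set Filter Topology

section LinearODE

variable {E : Type*} [NormedAddCommGroup E] [NormedSpace ℝ E] {A : ℝ → E →L[ℝ] E}

theorem eq_of_isIntegralCurve_linear (hA : Continuous A) {y z : ℝ → E}
    (hy : IsIntegralCurve y fun t ↦ A t) (hz : IsIntegralCurve z fun t ↦ A t)
    {t₀ : ℝ} (h₀ : y t₀ = z t₀) : y = z := by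
  funext t
  obtain ⟨a, ha⟩ := exists_lt (min t t₀)
  obtain ⟨b, hb⟩ := exists_gt (max t t₀)
  obtain ⟨ht, ht₀⟩ : t ∈ Ioo a b ∧ t₀ ∈ Ioo a b := by
    rw [lt_min_iff] at ha
    rw [max_lt_iff] at hb
    exact ⟨⟨ha.1, hb.1⟩, ha.2, hb.2⟩
  obtain ⟨K, hK⟩ := (isCompact_Icc (a := a) (b := b)).exists_bound_of_continuousOn hA.continuousOn
  have hLip : ∀ τ ∈ Ioo a b, LipschitzOnWith K.toNNReal (A τ) univ := fun τ hτ ↦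
    ((A τ).lipschitz.weaken <| NNReal.coe_le_coe.1 <|
      (hK τ (Ioo_subset_Icc_self hτ)).trans K.le_coe_toNNReal).lipschitzOnWith
  exact ODE_solution_unique_of_mem_Ioo hLip ht₀ (fun τ _ ↦ ⟨hy τ, mem_univ _⟩)
    (fun τ _ ↦ ⟨hz τ, mem_univ _⟩) h₀ ht

theorem eq_iff_forcing_eq_zero (hA : Continuous A) {y z r : ℝ → E}
    (hy : IsIntegralCurve y fun t x ↦ A t x + r t) (hz : IsIntegralCurve z fun t ↦ A t)
    {t₀ : ℝ} (h₀ : y t₀ = z t₀) : y = z ↔ ∀ t, r t = 0 := by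
  refine ⟨?_, fun hr ↦ eq_of_isIntegralCurve_linear hA (fun t ↦ ?_) hz h₀⟩
  · rintro rfl t
    simpa using (hy t).unique (hz t)
  · simpa [hr t] using hy t

variable {ι : Type*} {l : Filter ι} {a b K : ℝ} {q r : ι → ℝ → E}

theorem uniformCauchySeqOn_of_approx_linear
    (hA : ∀ t ∈ Icc a b, ‖A t‖ ≤ K)
    (hq : ∀ n, IsIntegralCurve (q n) fun t x ↦ A t x + r n t)
    (hr : TendstoUniformlyOn r 0 l (Icc a b)) (ha : Cauchy (map (q · a) l)) :
    UniformCauchySeqOn q l (Icc a b) := by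
  intro U hU
  obtain ⟨ε, hε, hεU⟩ := Metric.mem_uniformity_dist.1 hU
  obtain ⟨η, hη, hηε⟩ := exists_pos_mul_lt hε (gronwallBound 1 K 2 (b - a))
  have homogeneous : gronwallBound η K (2 * η) (b - a) = gronwallBound 1 K 2 (b - a) * η := by
    unfold gronwallBound
    split_ifs <;> ring
  have hstart : ∀ᶠ p : ι × ι in l ×ˢ l, dist (q p.1 a) (q p.2 a) < η := by
    have := ha.2 (Metric.dist_mem_uniformity hη)
    rwa [prod_map_map_eq] at this
  have hsmall : ∀ᶠ n in l, ∀ t ∈ Icc a b, ‖r n t‖ < η := by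
    simpa using Metric.tendstoUniformlyOn_iff.1 hr η hη
  filter_upwards [hstart, hsmall.prod_mk hsmall] with p hp ⟨hp₁, hp₂⟩ t ht
  have hK : 0 ≤ K := (norm_nonneg _).trans (hA t ht)
  have hdiff : ∀ τ, HasDerivAt (fun τ ↦ q p.1 τ - q p.2 τ)
      (A τ (q p.1 τ - q p.2 τ) + (r p.1 τ - r p.2 τ)) τ := fun τ ↦
    ((hq p.1 τ).sub (hq p.2 τ)).congr_deriv (by simp only [map_sub]; abel)
  refine hεU ?_
  rw [dist_eq_norm]
  calc ‖q p.1 t - q p.2 t‖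
      ≤ gronwallBound η K (2 * η) (t - a) := by
        refine norm_le_gronwallBound_of_norm_deriv_right_le
          (fun τ _ ↦ (hdiff τ).continuousAt.continuousWithinAt)
          (fun τ _ ↦ (hdiff τ).hasDerivWithinAt) (by simpa [dist_eq_norm] using hp.le)
          (fun τ hτ ↦ (norm_add_le _ _).trans (add_le_add ?_ ?_)) t ht
        · exact (A τ).le_of_opNorm_le (hA τ (Ico_subset_Icc_self hτ)) _
        · linarith [norm_sub_le (r p.1 τ) (r p.2 τ), hp₁ τ (Ico_subset_Icc_self hτ),
            hp₂ τ (Ico_subset_Icc_self hτ)]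
    _ ≤ gronwallBound η K (2 * η) (b - a) :=
        gronwallBound_mono hη.le (by positivity) hK (by linarith [ht.2])
    _ < ε := homogeneous ▸ hηε

theorem hasDerivAt_of_tendsto_of_approx_linear [l.NeBot]
    (hA : ∀ t ∈ Icc a b, ‖A t‖ ≤ K)
    (hq : ∀ n, IsIntegralCurve (q n) fun t x ↦ A t x + r n t)
    (hr : TendstoUniformlyOn r 0 l (Icc a b)) {y : ℝ → E}
    (hy : ∀ t ∈ Icc a b, Tendsto (q · t) l (𝓝 (y t))) {t : ℝ} (ht : t ∈ Ioo a b) :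
    HasDerivAt y (A t (y t)) t := by
  have ha : Cauchy (map (q · a) l) :=
    (hy a (left_mem_Icc.2 (ht.1.trans ht.2).le)).cauchy_map
  have hq_lim : TendstoUniformlyOn q y l (Icc a b) :=
    (uniformCauchySeqOn_of_approx_linear hA hq hr ha).tendstoUniformlyOn_of_tendsto hy
  have hAq_lim : TendstoUniformlyOn (fun n t ↦ A t (q n t)) (fun t ↦ A t (y t)) l (Icc a b) := by
    refine Metric.tendstoUniformlyOn_iff.2 fun ε hε ↦ ?_
    obtain ⟨η, hη, hηε⟩ := exists_pos_mul_lt hε K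
    filter_upwards [Metric.tendstoUniformlyOn_iff.1 hq_lim η hη] with n hn τ hτ
    calc dist (A τ (y τ)) (A τ (q n τ)) = ‖A τ (y τ - q n τ)‖ := by rw [dist_eq_norm, map_sub]
      _ ≤ K * dist (y τ) (q n τ) := by
        rw [dist_eq_norm]
        exact (A τ).le_of_opNorm_le (hA τ hτ) _
      _ ≤ K * η := by
        have := (norm_nonneg _).trans (hA τ hτ)
        gcongr
        exact (hn τ hτ).le
      _ < ε := hηε
  have hq'_lim := (hAq_lim.add hr).mono Ioo_subset_Icc_self
  rw [add_zero] at hq'_lim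
  exact hasDerivAt_of_tendstoUniformlyOn isOpen_Ioo hq'_lim
    (Eventually.of_forall fun n τ _ ↦ hq n τ) (fun τ hτ ↦ hy τ (Ioo_subset_Icc_self hτ)) ht

end LinearODE

section FirstVariation

variable {E G : Type*} [NormedAddCommGroup E] [NormedSpace ℝ E]
  [NormedAddCommGroup G] [NormedSpace ℝ G]

theorem continuous_fderiv_of_contDiff_uncurry {T : Type*} [NormedAddCommGroup T] [NormedSpace ℝ T]
    {v : T → E → G} (hv : ContDiff ℝ 1 (Function.uncurry v)) :
    Continuous fun p : T × E ↦ fderiv ℝ (v p.1) p.2 :=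
  (ContDiff.fderiv (f := fun p : T × E ↦ v p.1) (g := Prod.snd) (n := 0) (m := 1)
    (hv.comp (contDiff_fst.fst.prodMk contDiff_snd)) contDiff_snd (by simp)).continuous

theorem exists_norm_sub_sub_fderiv_le_near_curve {T : Type*} [TopologicalSpace T] {v : T → E → G}
    (hv : ∀ t, Differentiable ℝ (v t)) (hv' : Continuous fun p : T × E ↦ fderiv ℝ (v p.1) p.2)
    {x : T → E} (hx : Continuous x) {S : Set T} (hS : IsCompact S) {ε : ℝ} (hε : 0 < ε) :
    ∃ ρ > 0, ∀ t ∈ S, ∀ z, ‖z - x t‖ < ρ →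
      ‖v t z - v t (x t) - fderiv ℝ (v t) (x t) (z - x t)‖ ≤ ε * ‖z - x t‖ := by
  have hcont : Continuous fun p : E × T ↦
      ‖fderiv ℝ (v p.2) (x p.2 + p.1) - fderiv ℝ (v p.2) (x p.2)‖ :=
    ((hv'.comp (f := fun p : E × T ↦ (p.2, x p.2 + p.1)) (by fun_prop)).sub
      (hv'.comp (f := fun p : E × T ↦ (p.2, x p.2)) (by fun_prop))).norm
  have hnear : ∀ᶠ w in 𝓝 (0 : E), ∀ t ∈ S,
      ‖fderiv ℝ (v t) (x t + w) - fderiv ℝ (v t) (x t)‖ < ε :=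
    hS.eventually_forall_of_forall_eventually fun t _ ↦
      hcont.continuousAt.eventually_lt_const (by simpa using hε)
  obtain ⟨ρ, hρ, hball⟩ := Metric.eventually_nhds_iff_ball.1 hnear
  refine ⟨ρ, hρ, fun t ht z hz ↦ ?_⟩
  refine (convex_ball (x t) ρ).norm_image_sub_le_of_norm_fderiv_le' (fun y _ ↦ hv t y)
    (fun y hy ↦ ?_) (Metric.mem_ball_self hρ) (mem_ball_iff_norm.2 hz)
  simpa using (hball (y - x t) (by simpa [dist_eq_norm] using hy) t ht).le

/-- Unlike in `dist_le_of_trajectories_ODE_of_mem`, the second trajectory is not assumed to stay in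
the tube where the Lipschitz bound holds: the estimate itself prevents it from leaving. -/
theorem norm_sub_le_mul_exp_of_lipschitz_near {v : ℝ → E → E} {x y : ℝ → E} {a b K L δ ρ : ℝ}
    (hL : 0 ≤ L) (hKL : K < L)
    (hv : ∀ t ∈ Icc a b, ∀ z, ‖z - x t‖ < ρ → ‖v t z - v t (x t)‖ ≤ K * ‖z - x t‖)
    (hx : IsIntegralCurve x v) (hy : IsIntegralCurve y v)
    (hδ : 0 < δ) (ha : ‖y a - x a‖ ≤ δ) (hρ : δ * Real.exp (L * (b - a)) < ρ) :
    ∀ t ∈ Icc a b, ‖y t - x t‖ ≤ δ * Real.exp (L * (t - a)) := by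
  have hdiff : ∀ t, HasDerivAt (fun t ↦ y t - x t) (v t (y t) - v t (x t)) t :=
    fun t ↦ (hy t).sub (hx t)
  have hbarrier : ∀ t, HasDerivAt (fun t ↦ δ * Real.exp (L * (t - a)))
      (L * (δ * Real.exp (L * (t - a)))) t := fun t ↦
    (((((hasDerivAt_id t).sub_const a).const_mul L).exp).const_mul δ).congr_deriv
      (by simp only [id]; ring)
  refine image_norm_le_of_norm_deriv_right_lt_deriv_boundary
    (fun t _ ↦ (hdiff t).continuousAt.continuousWithinAt)
    (fun t _ ↦ (hdiff t).hasDerivWithinAt) (by simpa using ha) hbarrier fun t ht heq ↦ ?_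
  have htube : ‖y t - x t‖ < ρ := by
    refine heq.trans_lt (lt_of_le_of_lt ?_ hρ)
    gcongr
    exact ht.2.le
  refine (hv t (Ico_subset_Icc_self ht) (y t) htube).trans_lt ?_
  rw [heq]
  gcongr

variable {v φ : ℝ → E → E}

theorem continuous_fderiv_along_isIntegralCurve
    (hv' : Continuous fun p : ℝ × E ↦ fderiv ℝ (v p.1) p.2) {x : ℝ → E}
    (hx : IsIntegralCurve x v) : Continuous fun t ↦ fderiv ℝ (v t) (x t) :=
  hv'.comp (continuous_id.prodMk hx.continuous)

theorem exists_norm_flow_sub_le (hv : ∀ t, Differentiable ℝ (v t))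
    (hv' : Continuous fun p : ℝ × E ↦ fderiv ℝ (v p.1) p.2) (hφ : ∀ X, IsIntegralCurve (φ · X) v)
    {a b : ℝ} {X : E} (ha : DifferentiableAt ℝ (φ a) X) :
    ∃ C, ∀ᶠ Y in 𝓝 X, ∀ t ∈ Icc a b, ‖φ t Y - φ t X‖ ≤ C * ‖Y - X‖ := by
  obtain ⟨M, hM⟩ := (isCompact_Icc (a := a) (b := b)).exists_bound_of_continuousOn
    (continuous_fderiv_along_isIntegralCurve hv' (hφ X)).continuousOn
  obtain ⟨ρ, hρ, hnear⟩ := exists_norm_sub_sub_fderiv_le_near_curve hv hv' (hφ X).continuous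
    (isCompact_Icc (a := a) (b := b)) one_pos
  have hLip : ∀ t ∈ Icc a b, ∀ z, ‖z - φ t X‖ < ρ →
      ‖v t z - v t (φ t X)‖ ≤ (M + 1) * ‖z - φ t X‖ := fun t ht z hz ↦ by
    linarith [hnear t ht z hz, (fderiv ℝ (v t) (φ t X)).le_of_opNorm_le (hM t ht) (z - φ t X),
      norm_le_norm_sub_add (v t z - v t (φ t X)) (fderiv ℝ (v t) (φ t X) (z - φ t X))]
  obtain ⟨C, hC, hCX⟩ := ha.hasFDerivAt.isBigO_sub.exists_pos
  set L := |M + 1| + 1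
  set D := C * Real.exp (L * (b - a))
  have hsmall : ∀ᶠ Y in 𝓝 X, D * ‖Y - X‖ < ρ := by
    have : Continuous fun Y ↦ D * ‖Y - X‖ := by fun_prop
    exact this.continuousAt.eventually_lt_const (by simpa using hρ)
  refine ⟨D, ?_⟩
  filter_upwards [hCX.bound, hsmall] with Y hY hYρ t ht
  rcases eq_or_ne Y X with rfl | hne
  · simp
  have hpos : 0 < C * ‖Y - X‖ := mul_pos hC (norm_sub_pos_iff.2 hne)
  calc ‖φ t Y - φ t X‖ ≤ C * ‖Y - X‖ * Real.exp (L * (t - a)) :=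
        norm_sub_le_mul_exp_of_lipschitz_near (by positivity)
          ((le_abs_self _).trans_lt (lt_add_one _)) hLip (hφ X) (hφ Y) hpos hY
          (by rwa [mul_right_comm]) t ht
    _ ≤ C * ‖Y - X‖ * Real.exp (L * (b - a)) := by gcongr; exact ht.2
    _ = D * ‖Y - X‖ := mul_right_comm _ _ _

theorem tendstoUniformlyOn_linearization_error (hv : ∀ t, Differentiable ℝ (v t))
    (hv' : Continuous fun p : ℝ × E ↦ fderiv ℝ (v p.1) p.2) (hφ : ∀ X, IsIntegralCurve (φ · X) v)
    {a b : ℝ} {X : E} (ha : DifferentiableAt ℝ (φ a) X) (h : E) :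
    TendstoUniformlyOn (fun s t ↦ s⁻¹ • (v t (φ t (X + s • h)) - v t (φ t X)
      - fderiv ℝ (v t) (φ t X) (φ t (X + s • h) - φ t X))) 0 (𝓝[≠] (0 : ℝ)) (Icc a b) := by
  obtain ⟨C, hφC⟩ := exists_norm_flow_sub_le (b := b) hv hv' hφ ha
  refine Metric.tendstoUniformlyOn_iff.2 fun ε hε ↦ ?_
  obtain ⟨η, hη, hηε⟩ := exists_pos_mul_lt hε (C * ‖h‖)
  obtain ⟨ρ, hρ, hnear⟩ := exists_norm_sub_sub_fderiv_le_near_curve hv hv' (hφ X).continuous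
    (isCompact_Icc (a := a) (b := b)) hη
  have hφC' : ∀ᶠ s : ℝ in 𝓝 0, ∀ t ∈ Icc a b, ‖φ t (X + s • h) - φ t X‖ ≤ C * ‖s • h‖ := by
    have hline : Tendsto (fun s : ℝ ↦ X + s • h) (𝓝 0) (𝓝 X) :=
      Continuous.tendsto' (by fun_prop) _ _ (by simp)
    simpa using hline.eventually hφC
  have hsmall : ∀ᶠ s : ℝ in 𝓝 0, C * ‖s • h‖ < ρ := by
    have : Continuous fun s : ℝ ↦ C * ‖s • h‖ := by fun_prop
    exact this.continuousAt.eventually_lt_const (by simpa using hρ)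
  filter_upwards [hφC'.filter_mono nhdsWithin_le_nhds, hsmall.filter_mono nhdsWithin_le_nhds,
    self_mem_nhdsWithin] with s hs hsρ hs₀ t ht
  have hs_pos : 0 < ‖s‖ := norm_pos_iff.2 hs₀
  rw [Pi.zero_apply, dist_zero_left, norm_smul, norm_inv, inv_mul_lt_iff₀ hs_pos]
  calc _ ≤ η * ‖φ t (X + s • h) - φ t X‖ := hnear t ht _ ((hs t ht).trans_lt hsρ)
    _ ≤ η * (C * ‖s • h‖) := by gcongr; exact hs t ht
    _ = ‖s‖ * (C * ‖h‖ * η) := by rw [norm_smul]; ring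
    _ < ‖s‖ * ε := by gcongr

theorem isIntegralCurve_fderiv_flow (hv : ∀ t, Differentiable ℝ (v t))
    (hv' : Continuous fun p : ℝ × E ↦ fderiv ℝ (v p.1) p.2) (hφ : ∀ X, IsIntegralCurve (φ · X) v)
    {F : ℝ → E → E →L[ℝ] E} (hF : ∀ t X, HasFDerivAt (φ t) (F t X) X) (X h : E) :
    IsIntegralCurve (F · X h) fun t ↦ fderiv ℝ (v t) (φ t X) := by
  intro t
  obtain ⟨M, hM⟩ := (isCompact_Icc (a := t - 1) (b := t + 1)).exists_bound_of_continuousOn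
    (continuous_fderiv_along_isIntegralCurve hv' (hφ X)).continuousOn
  refine hasDerivAt_of_tendsto_of_approx_linear (l := 𝓝[≠] (0 : ℝ)) hM
    (q := fun s τ ↦ s⁻¹ • (φ τ (X + s • h) - φ τ X)) (fun s τ ↦ ?_)
    (tendstoUniformlyOn_linearization_error hv hv' hφ (hF (t - 1) X).differentiableAt h)
    (fun τ _ ↦ ((hF τ X).hasLineDerivAt h).tendsto_slope_zero) ⟨by linarith, by linarith⟩
  refine (((hφ (X + s • h) τ).sub (hφ X τ)).const_smul s⁻¹).congr_deriv ?_
  simp only [map_smul, ← smul_add, add_sub_cancel]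

end FirstVariation

section Liouville

variable {𝕜 : Type*} [NontriviallyNormedField 𝕜]

theorem hasDerivAt_matrix_det {n : Type*} [Fintype n] [DecidableEq n] {M : 𝕜 → Matrix n n 𝕜}
    {M' : Matrix n n 𝕜} {t : 𝕜} (hM : ∀ i j, HasDerivAt (fun τ ↦ M τ i j) (M' i j) t) :
    HasDerivAt (fun τ ↦ (M τ).det) (∑ i, ((M t).updateRow i (M' i)).det) t := by
  let detRows : ContinuousMultilinearMap 𝕜 (fun _ : n ↦ n → 𝕜) 𝕜 :=
    ⟨Matrix.detRowAlternating.toMultilinearMap, continuous_id.matrix_det⟩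
  have hrows : HasDerivAt (fun τ i ↦ M τ i) (fun i ↦ M' i) t :=
    hasDerivAt_pi.2 fun i ↦ hasDerivAt_pi.2 (hM i)
  exact ((detRows.hasFDerivAt (M t)).comp_hasDerivAt t hrows).congr_deriv
    (detRows.linearDeriv_apply _ _)

theorem hasDerivAt_matrix_det_of_linear {n : Type*} [Fintype n] [DecidableEq n]
    {M : 𝕜 → Matrix n n 𝕜} {A : Matrix n n 𝕜} {t : 𝕜}
    (hM : ∀ i j, HasDerivAt (fun τ ↦ M τ i j) ((A * M t) i j) t) :
    HasDerivAt (fun τ ↦ (M τ).det) (A.trace * (M t).det) t := by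
  refine (hasDerivAt_matrix_det hM).congr_deriv ?_
  have hrow : ∀ i, (A * M t) i = ∑ k, A i k • M t k := fun i ↦ by
    ext j
    simp [Matrix.mul_apply]
  simp only [hrow, Matrix.det_updateRow_sum, Matrix.trace, Matrix.diag_apply, smul_eq_mul,
    Finset.sum_mul]

theorem hasDerivAt_det_of_linear [CompleteSpace 𝕜] {E : Type*} [NormedAddCommGroup E]
    [NormedSpace 𝕜 E] [FiniteDimensional 𝕜 E] {M : 𝕜 → E →L[𝕜] E} {A : E →L[𝕜] E} {t : 𝕜}
    (hM : ∀ h, HasDerivAt (fun τ ↦ M τ h) (A (M t h)) t) :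
    HasDerivAt (fun τ ↦ (M τ).det) (LinearMap.trace 𝕜 E A * (M t).det) t := by
  let b := Module.finBasis 𝕜 E
  simp only [ContinuousLinearMap.det, ← LinearMap.det_toMatrix b,
    LinearMap.trace_eq_matrix_trace 𝕜 b]
  refine hasDerivAt_matrix_det_of_linear fun i j ↦ ?_
  rw [← LinearMap.toMatrix_comp]
  simpa [LinearMap.toMatrix_apply, Function.comp_def] using
    (b.coord i).toContinuousLinearMap.hasFDerivAt.comp_hasDerivAt t (hM (b j))

end Liouville

section TransportOfTwoForms

variable {E : Type*} [NormedAddCommGroup E] [NormedSpace ℝ E]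

/-- The Lie derivative `d_L² W` along the velocity field `u` of the 2-form `det (W, ·, ·)`,
represented by the vector field `W`. In dimension `n` the same formula describes the
`(n - 1)`-form `det (W, ·, …, ·)`. -/
def lieDerivTwoForm (u W : ℝ → E → E) (t : ℝ) (x : E) : E :=
  deriv (fun τ ↦ W τ x) t + fderiv ℝ (W t) x (u t x)
    + LinearMap.trace ℝ E (fderiv ℝ (u t) x) • W t x - fderiv ℝ (u t) x (W t x)

theorem hasDerivAt_along_curve {G : Type*} [NormedAddCommGroup G] [NormedSpace ℝ G]
    {W : ℝ → E → G} {x : ℝ → E} {x' : E} {t : ℝ}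
    (hW : DifferentiableAt ℝ (Function.uncurry W) (t, x t)) (hx : HasDerivAt x x' t) :
    HasDerivAt (fun τ ↦ W τ (x τ))
      (deriv (fun τ ↦ W τ (x t)) t + fderiv ℝ (W t) (x t) x') t := by
  have hD := hW.hasFDerivAt
  have htime : HasDerivAt (fun τ ↦ W τ (x t)) (fderiv ℝ (Function.uncurry W) (t, x t) (1, 0)) t :=
    hD.comp_hasDerivAt (f := fun τ ↦ (τ, x t)) t
      ((hasDerivAt_id t).prodMk (hasDerivAt_const t (x t)))
  have hspace : HasFDerivAt (W t) _ (x t) := hD.comp (x t) (hasFDerivAt_prodMk_right t (x t))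
  rw [htime.deriv, hspace.fderiv]
  refine (hD.comp_hasDerivAt (f := fun τ ↦ (τ, x τ)) t
    ((hasDerivAt_id t).prodMk hx)).congr_deriv ?_
  simp [← map_add]

variable {u φ W : ℝ → E → E} {F : ℝ → E → E →L[ℝ] E}

theorem fderiv_flow_zero (hφ₀ : ∀ X, φ 0 X = X) (hF : ∀ t X, HasFDerivAt (φ t) (F t X) X) (X : E) :
    F 0 X = ContinuousLinearMap.id ℝ E :=
  (hF 0 X).unique ((funext hφ₀ : φ 0 = id) ▸ hasFDerivAt_id X)

theorem injective_fderiv_flow (hu : ∀ t, Differentiable ℝ (u t))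
    (hu' : Continuous fun p : ℝ × E ↦ fderiv ℝ (u p.1) p.2) (hφ₀ : ∀ X, φ 0 X = X)
    (hφ : ∀ X, IsIntegralCurve (φ · X) u) (hF : ∀ t X, HasFDerivAt (φ t) (F t X) X)
    (t : ℝ) (X : E) : Function.Injective (F t X) := by
  intro h k hhk
  have heq : (F · X h) = (F · X k) :=
    eq_of_isIntegralCurve_linear (continuous_fderiv_along_isIntegralCurve hu' (hφ X))
      (isIntegralCurve_fderiv_flow hu hu' hφ hF X h)
      (isIntegralCurve_fderiv_flow hu hu' hφ hF X k) hhk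
  simpa [fderiv_flow_zero hφ₀ hF] using congrFun heq 0

theorem det_fderiv_flow_ne_zero (hu : ∀ t, Differentiable ℝ (u t))
    (hu' : Continuous fun p : ℝ × E ↦ fderiv ℝ (u p.1) p.2) (hφ₀ : ∀ X, φ 0 X = X)
    (hφ : ∀ X, IsIntegralCurve (φ · X) u) (hF : ∀ t X, HasFDerivAt (φ t) (F t X) X)
    (t : ℝ) (X : E) : (F t X).det ≠ 0 := fun h₀ ↦
  (LinearMap.bot_lt_ker_of_det_eq_zero h₀).ne'
    (LinearMap.ker_eq_bot.2 (injective_fderiv_flow hu hu' hφ₀ hφ hF t X))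

variable [FiniteDimensional ℝ E]

theorem isIntegralCurve_det_smul_comp_flow (hu : ∀ t, Differentiable ℝ (u t))
    (hu' : Continuous fun p : ℝ × E ↦ fderiv ℝ (u p.1) p.2)
    (hφ : ∀ X, IsIntegralCurve (φ · X) u) (hF : ∀ t X, HasFDerivAt (φ t) (F t X) X)
    (hW : Differentiable ℝ (Function.uncurry W)) (X : E) :
    IsIntegralCurve (fun t ↦ (F t X).det • W t (φ t X))
      fun t y ↦ fderiv ℝ (u t) (φ t X) y + (F t X).det • lieDerivTwoForm u W t (φ t X) := by
  intro t
  have hdet := hasDerivAt_det_of_linear fun h ↦ isIntegralCurve_fderiv_flow hu hu' hφ hF X h t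
  refine (hdet.smul (hasDerivAt_along_curve hW.differentiableAt (hφ X t))).congr_deriv ?_
  simp only [lieDerivTwoForm, map_smul]
  module

theorem two_form_moving_with_fluid_iff_general (hu : ∀ t, Differentiable ℝ (u t))
    (hu' : Continuous fun p : ℝ × E ↦ fderiv ℝ (u p.1) p.2) (hφ₀ : ∀ X, φ 0 X = X)
    (hφ : ∀ X, IsIntegralCurve (φ · X) u) (hφ_surj : ∀ t, Function.Surjective (φ t))
    (hF : ∀ t X, HasFDerivAt (φ t) (F t X) X) (hW : Differentiable ℝ (Function.uncurry W)) :
    (∀ t x, lieDerivTwoForm u W t x = 0) ↔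
      ∀ t X, (F t X).det • W t (φ t X) = F t X (W 0 X) := by
  have hstart : ∀ X, (F 0 X).det • W 0 (φ 0 X) = F 0 X (W 0 X) := fun X ↦ by
    simp [fderiv_flow_zero hφ₀ hF, hφ₀, ContinuousLinearMap.det]
  calc (∀ t x, lieDerivTwoForm u W t x = 0)
      ↔ ∀ X t, (F t X).det • lieDerivTwoForm u W t (φ t X) = 0 := by
        simp only [smul_eq_zero, det_fderiv_flow_ne_zero hu hu' hφ₀ hφ hF, false_or]
        exact (forall_congr' fun t ↦ (hφ_surj t).forall).trans forall_comm
    _ ↔ ∀ X, (fun t ↦ (F t X).det • W t (φ t X)) = fun t ↦ F t X (W 0 X) :=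
        forall_congr' fun X ↦ (eq_iff_forcing_eq_zero
          (continuous_fderiv_along_isIntegralCurve hu' (hφ X))
          (isIntegralCurve_det_smul_comp_flow hu hu' hφ hF hW X)
          (isIntegralCurve_fderiv_flow hu hu' hφ hF X (W 0 X)) (hstart X)).symm
    _ ↔ ∀ t X, (F t X).det • W t (φ t X) = F t X (W 0 X) := by
        simp only [funext_iff]
        exact forall_comm

end TransportOfTwoForms

/-- The 2-form `det(W, ·, ·)` is moving with the fluid
iff `W = F W₀ / det F`. -/
theorem two_form_moving_with_fluid_iff
    (u φ : ℝ → E3 → E3)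
    (F : ℝ → E3 → (E3 ≃L[ℝ] E3))
    (hu : ContDiff ℝ (⊤ : ℕ∞) (Function.uncurry u))
    (hφ0 : ∀ X, φ 0 X = X)
    (hφt : ∀ t X, HasDerivAt (fun τ => φ τ X) (u t (φ t X)) t)
    (hφsmooth : ∀ t, ContDiff ℝ (⊤ : ℕ∞) (φ t))
    (hφbij : ∀ t, Function.Bijective (φ t))
    (hφinv : ∀ t, ContDiff ℝ (⊤ : ℕ∞) (Function.invFun (φ t)))
    (hF : ∀ t X, (F t X : E3 →L[ℝ] E3) = fderiv ℝ (φ t) X)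
    (W : ℝ → E3 → E3)
    (hW : ContDiff ℝ 1 (Function.uncurry W)) :
    (∀ t x, deriv (fun τ => W τ x) t + fderiv ℝ (W t) x (u t x)
        + divv (u t) x • W t x - fderiv ℝ (u t) x (W t x) = 0) ↔
      (∀ t X, LinearMap.det ((F t X : E3 →L[ℝ] E3) : E3 →ₗ[ℝ] E3) • W t (φ t X)
          = F t X (W 0 X)) := by
  exact two_form_moving_with_fluid_iff_general
    (fun t ↦ (hu.comp (contDiff_prodMk_right t)).differentiable (by simp))
    (continuous_fderiv_of_contDiff_uncurry (hu.of_le (by exact_mod_cast le_top)))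
    hφ0 (fun X t ↦ hφt t X) (fun t ↦ (hφbij t).surjective)
    (fun t X ↦ hF t X ▸ ((hφsmooth t).differentiable (by simp) X).hasFDerivAt)
    (hW.differentiable one_ne_zero)
end
end

section
/- Let M : ℝ × E → (E →L[ℝ] E) be a C¹ field of linear maps and define its Lie derivative d_L M (t, x) := ∂M/∂t(t, x) + D_x M(t, x)(u(t, x)) + M(t, x) ∘ D_x u(t, x) − D_x u(t, x) ∘ M(t, x). Then d_L M ≡ 0 if and only if M(t, φ(t, X)) = F(t, X) ∘ M(0, X) ∘ F(t, X)⁻¹ for all (t, X); i.e. a mixed (1,1)-tensor field is moving with the fluid if and only if it is conjugate by F to a time-independent field on the reference space. -/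
noncomputable section

local notation "E3" => EuclideanSpace ℝ (Fin 3)

/-! The pull-back `F⁻¹ M(t, φ) F` of a mixed tensor field along the flow has as time derivative the
pull-back of the Lie derivative. As `F` is invertible and every `φ t` is onto, the Lie derivative
vanishes iff all pull-backs are constant in time, and at time `0` the pull-back is `M(0, ·)`.

The time derivative of `F` comes from the variational equation `∂F/∂t = D_x u ∘ F`. As `φ` is only
assumed differentiable in `x` at each fixed time, the two derivatives cannot simply be exchanged.
Instead, the difference quotients of the flow in a fixed direction have uniformly bounded time
derivatives, so their integral equations pass to the limit by dominated convergence. -/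

open Set Filter Topology Metric Function Asymptotics
open scoped NNReal

section Limits

variable {G : Type*} [NormedAddCommGroup G] [NormedSpace ℝ G]
  {ι : Type*} {l : Filter ι} [l.NeBot] {f f' : ι → ℝ → G} {g g' : ℝ → G} {a b : ℝ} {C : ℝ≥0}

theorem lipschitzOnWith_of_tendsto_of_nnnorm_deriv_le
    (hf : ∀ i, ∀ t ∈ Icc a b, HasDerivAt (f i) (f' i t) t)
    (hbound : ∀ᶠ i in l, ∀ t ∈ Icc a b, ‖f' i t‖₊ ≤ C)
    (hg : ∀ t ∈ Icc a b, Tendsto (f · t) l (𝓝 (g t))) :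
    LipschitzOnWith C g (Icc a b) := by
  refine LipschitzOnWith.of_dist_le_mul fun s hs t ht =>
    le_of_tendsto ((hg s hs).dist (hg t ht)) (hbound.mono fun i hi => ?_)
  exact ((convex_Icc a b).lipschitzOnWith_of_nnnorm_hasDerivWithin_le
    (fun τ hτ => (hf i τ hτ).hasDerivWithinAt) hi).dist_le_mul s hs t ht

variable [CompleteSpace G] [l.IsCountablyGenerated]

theorem integral_eq_sub_of_tendsto_of_nnnorm_deriv_le
    (hf : ∀ i, ∀ t ∈ Icc a b, HasDerivAt (f i) (f' i t) t)
    (hf' : ∀ i, ContinuousOn (f' i) (Icc a b))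
    (hbound : ∀ᶠ i in l, ∀ t ∈ Icc a b, ‖f' i t‖₊ ≤ C)
    (hg : ∀ t ∈ Icc a b, Tendsto (f · t) l (𝓝 (g t)))
    (hg' : ∀ t ∈ Icc a b, Tendsto (f' · t) l (𝓝 (g' t))) {t : ℝ} (ht : t ∈ Icc a b) :
    ∫ τ in a..t, g' τ = g t - g a := by
  have ha : a ∈ Icc a b := left_mem_Icc.2 (ht.1.trans ht.2)
  have hsub : uIcc a t ⊆ Icc a b := uIcc_subset_Icc ha ht
  have hint : ∀ i, IntervalIntegrable (f' i) MeasureTheory.volume a t :=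
    fun i => ((hf' i).mono hsub).intervalIntegrable
  have hlim : Tendsto (fun i => ∫ τ in a..t, f' i τ) l (𝓝 (∫ τ in a..t, g' τ)) :=
    intervalIntegral.tendsto_integral_filter_of_dominated_convergence (fun _ => (C : ℝ))
      (.of_forall fun i => (hint i).def'.aestronglyMeasurable)
      (hbound.mono fun i hi => .of_forall fun τ hτ => hi τ (hsub (uIoc_subset_uIcc hτ)))
      intervalIntegrable_const
      (.of_forall fun τ hτ => hg' τ (hsub (uIoc_subset_uIcc hτ)))
  refine tendsto_nhds_unique hlim (((hg t ht).sub (hg a ha)).congr fun i => ?_)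
  exact (intervalIntegral.integral_eq_sub_of_hasDerivAt
    (fun τ hτ => hf i τ (hsub hτ)) (hint i)).symm

theorem hasDerivAt_of_tendsto_of_nnnorm_deriv_le
    (hf : ∀ i, ∀ t ∈ Icc a b, HasDerivAt (f i) (f' i t) t)
    (hf' : ∀ i, ContinuousOn (f' i) (Icc a b))
    (hbound : ∀ᶠ i in l, ∀ t ∈ Icc a b, ‖f' i t‖₊ ≤ C)
    (hg : ∀ t ∈ Icc a b, Tendsto (f · t) l (𝓝 (g t)))
    (hg' : ∀ t ∈ Icc a b, Tendsto (f' · t) l (𝓝 (g' t)))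
    (hg'c : ContinuousOn g' (Icc a b)) {t : ℝ} (ht : t ∈ Ioo a b) :
    HasDerivAt g (g' t) t := by
  have hnhds : Icc a b ∈ 𝓝 t := Icc_mem_nhds ht.1 ht.2
  have hderiv : HasDerivAt (fun s => ∫ τ in a..s, g' τ) (g' t) t :=
    intervalIntegral.integral_hasDerivAt_right
      ((hg'c.mono (Icc_subset_Icc_right ht.2.le)).intervalIntegrable_of_Icc ht.1.le)
      ((hg'c.mono Ioo_subset_Icc_self).stronglyMeasurableAtFilter isOpen_Ioo t ht)
      (hg'c.continuousAt hnhds)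
  refine (hderiv.add_const (g a)).congr_of_eventuallyEq ?_
  filter_upwards [hnhds] with s hs
  rw [integral_eq_sub_of_tendsto_of_nnnorm_deriv_le hf hf' hbound hg hg' hs, sub_add_cancel]

end Limits

section OperatorDerivative

variable {E G : Type*} [NormedAddCommGroup E] [NormedSpace ℝ E]
  [NormedAddCommGroup G] [NormedSpace ℝ G]

theorem hasDerivAt_clm_of_forall_apply {A A' : ℝ → E →L[ℝ] G} {t : ℝ}
    (hA : ∀ᶠ s in 𝓝 t, ∀ x, HasDerivAt (A · x) (A' s x) s) (hA' : ContinuousAt A' t) :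
    HasDerivAt A (A' t) t := by
  refine .of_isLittleO (isLittleO_iff.2 fun ε hε => ?_)
  obtain ⟨δ, hδ, hball⟩ := eventually_nhds_iff_ball.1
    (hA.and (hA'.eventually (closedBall_mem_nhds (A' t) hε)))
  filter_upwards [ball_mem_nhds t hδ] with s hs
  refine ContinuousLinearMap.opNorm_le_bound _ (by positivity) fun x => ?_
  have hderiv : ∀ r ∈ ball t δ,
      HasDerivWithinAt (fun r => A r x - r • A' t x) ((A' r - A' t) x) (ball t δ) r :=
    fun r hr => by
      simpa using! (((hball r hr).1 x).sub ((hasDerivAt_id r).smul_const (A' t x))).hasDerivWithinAt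
  have hbound : ∀ r ∈ ball t δ, ‖(A' r - A' t) x‖ ≤ ε * ‖x‖ := fun r hr =>
    (A' r - A' t).le_of_opNorm_le (mem_closedBall_iff_norm.1 (hball r hr).2) x
  calc ‖(A s - A t - (s - t) • A' t) x‖
      = ‖(A s x - s • A' t x) - (A t x - t • A' t x)‖ := by
        congr 1; simp [sub_smul]; abel
    _ ≤ ε * ‖x‖ * ‖s - t‖ := (convex_ball t δ).norm_image_sub_le_of_norm_hasDerivWithin_le
        hderiv hbound (mem_ball_self hδ) hs
    _ = ε * ‖s - t‖ * ‖x‖ := by ring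

variable [CompleteSpace E]

-- Banach–Steinhaus bounds `A'` locally in operator norm, so `A` is locally Lipschitz.
theorem continuous_clm_of_forall_hasDerivAt_apply {A A' : ℝ → E →L[ℝ] G}
    (hA : ∀ t x, HasDerivAt (A · x) (A' t x) t) (hA' : ∀ x, Continuous (A' · x)) :
    Continuous A := by
  refine continuous_iff_continuousAt.2 fun t => ?_
  obtain ⟨C, hC⟩ : ∃ C, ∀ s : closedBall t 1, ‖A' s‖ ≤ C := banach_steinhaus fun x =>
    let ⟨c, hc⟩ := (isCompact_closedBall t 1).exists_bound_of_continuousOn (hA' x).continuousOn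
    ⟨c, fun s => hc s s.2⟩
  refine continuousAt_of_locally_lipschitz one_pos C fun s hs => ?_
  rw [dist_eq_norm, dist_eq_norm]
  have hC₀ : 0 ≤ C := (norm_nonneg _).trans (hC ⟨t, mem_closedBall_self zero_le_one⟩)
  refine ContinuousLinearMap.opNorm_le_bound _ (by positivity) fun x => ?_
  calc ‖(A s - A t) x‖ ≤ C * ‖x‖ * ‖s - t‖ :=
        (convex_closedBall t 1).norm_image_sub_le_of_norm_hasDerivWithin_le
          (fun r _ => (hA r x).hasDerivWithinAt)
          (fun r hr => (A' r).le_of_opNorm_le (hC ⟨r, hr⟩) x)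
          (mem_closedBall_self zero_le_one) hs.le
    _ = C * ‖s - t‖ * ‖x‖ := by ring

theorem hasDerivAt_clm_of_forall_hasDerivAt_apply_comp {B : ℝ → G →L[ℝ] G} {A : ℝ → E →L[ℝ] G}
    (hB : Continuous B) (hA : ∀ t x, HasDerivAt (A · x) (B t (A t x)) t) (t : ℝ) :
    HasDerivAt A (B t ∘L A t) t := by
  have hstrong : ∀ x, Continuous (A · x) :=
    fun x => continuous_iff_continuousAt.2 fun s => (hA s x).continuousAt
  have hAc : Continuous A := continuous_clm_of_forall_hasDerivAt_apply
    (A' := fun t => B t ∘L A t) hA fun x => hB.clm_apply (hstrong x)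
  exact hasDerivAt_clm_of_forall_apply (A' := fun t => B t ∘L A t) (.of_forall hA)
    (hB.clm_comp hAc).continuousAt

end OperatorDerivative

section Slices

variable {𝕜 T E G : Type*} [NontriviallyNormedField 𝕜] [NormedAddCommGroup T] [NormedSpace 𝕜 T]
  [NormedAddCommGroup E] [NormedSpace 𝕜 E] [NormedAddCommGroup G] [NormedSpace 𝕜 G]

theorem hasFDerivAt_slice {f : T → E → G} {t : T} {x : E}
    (hf : DifferentiableAt 𝕜 (uncurry f) (t, x)) :
    HasFDerivAt (f t) (fderiv 𝕜 (uncurry f) (t, x) ∘L .inr 𝕜 T E) x :=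
  hf.hasFDerivAt.comp x (hasFDerivAt_prodMk_right t x)

theorem continuous_fderiv_slice {f : T → E → G} (hf : ContDiff 𝕜 1 (uncurry f)) :
    Continuous fun p : T × E => fderiv 𝕜 (f p.1) p.2 := by
  simp only [fun p : T × E => (hasFDerivAt_slice (hf.differentiable one_ne_zero p)).fderiv]
  exact (hf.continuous_fderiv one_ne_zero).clm_comp continuous_const

theorem hasDerivAt_along_curve_s11 {f : 𝕜 → E → G} {γ : 𝕜 → E} {γ' : E} {t : 𝕜}
    (hf : DifferentiableAt 𝕜 (uncurry f) (t, γ t)) (hγ : HasDerivAt γ γ' t) :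
    HasDerivAt (fun τ => f τ (γ τ)) (deriv (fun τ => f τ (γ t)) t + fderiv 𝕜 (f t) (γ t) γ') t := by
  have hfixed : HasDerivAt (fun τ => f τ (γ t)) (fderiv 𝕜 (uncurry f) (t, γ t) (1, 0)) t :=
    hf.hasFDerivAt.comp_hasDerivAt (f := fun τ => (τ, γ t)) t
      ((hasDerivAt_id t).prodMk (hasDerivAt_const t (γ t)))
  have hmoving : HasDerivAt (fun τ => f τ (γ τ)) (fderiv 𝕜 (uncurry f) (t, γ t) (1, γ')) t :=
    hf.hasFDerivAt.comp_hasDerivAt (f := fun τ => (τ, γ τ)) t ((hasDerivAt_id t).prodMk hγ)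
  rw [hfixed.deriv, (hasFDerivAt_slice hf).fderiv]
  convert hmoving using 1
  simp [← map_add]

end Slices

theorem exists_eventually_lipschitzOnWith_closedBall {T E G : Type*} [NormedAddCommGroup T]
    [NormedSpace ℝ T] [NormedAddCommGroup E] [NormedSpace ℝ E] [NormedAddCommGroup G]
    [NormedSpace ℝ G] {f : T → E → G} {γ : T → E} {t₀ : T}
    (hf : ContDiffAt ℝ 1 (uncurry f) (t₀, γ t₀)) (hγ : ContinuousAt γ t₀) :
    ∃ K : ℝ≥0, ∃ r > 0, ∀ᶠ t in 𝓝 t₀, LipschitzOnWith K (f t) (closedBall (γ t) r) := by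
  obtain ⟨K, s, hs, hK⟩ := hf.exists_lipschitzOnWith
  obtain ⟨ε, hε, hεs⟩ := nhds_basis_closedBall.mem_iff.1 hs
  refine ⟨K, ε / 2, half_pos hε, ?_⟩
  filter_upwards [closedBall_mem_nhds t₀ hε, hγ.eventually (closedBall_mem_nhds _ (half_pos hε))]
    with t ht hγt
  have hmaps : MapsTo (Prod.mk t) (closedBall (γ t) (ε / 2)) s := fun y hy =>
    hεs (max_le ht ((dist_triangle y (γ t) (γ t₀)).trans
      ((add_le_add hy hγt).trans_eq (add_halves ε))))
  simpa only [mul_one] using! hK.comp (LipschitzWith.prodMk_left t).lipschitzOnWith hmaps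

section Flow

variable {E : Type*} [NormedAddCommGroup E] [NormedSpace ℝ E] {u : ℝ → E → E}

/- The factor `L > K` makes the bound grow strictly faster than the distance wherever they meet,
so `η` cannot leave the tube on which `u` is known to be Lipschitz. -/
theorem dist_le_mul_exp_of_lipschitzOnWith_closedBall {γ η : ℝ → E} {a b r δ L : ℝ} {K : ℝ≥0}
    (hKL : K < L) (hδ : 0 < δ) (hγ : IsIntegralCurveOn γ u (Icc a b))
    (hη : IsIntegralCurveOn η u (Icc a b))
    (hlip : ∀ t ∈ Ico a b, LipschitzOnWith K (u t) (closedBall (γ t) r))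
    (ha : dist (η a) (γ a) ≤ δ) (hr : δ * Real.exp (L * (b - a)) ≤ r) :
    ∀ t ∈ Icc a b, dist (η t) (γ t) ≤ δ * Real.exp (L * (t - a)) := by
  have hL : 0 ≤ L := K.coe_nonneg.trans hKL.le
  have hdiff : ∀ t ∈ Icc a b,
      HasDerivWithinAt (fun t => η t - γ t) (u t (η t) - u t (γ t)) (Icc a b) t :=
    fun t ht => (hη t ht).sub (hγ t ht)
  have hexp : ∀ t, HasDerivAt (fun t => δ * Real.exp (L * (t - a)))
      (L * (δ * Real.exp (L * (t - a)))) t := fun t =>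
    (((((hasDerivAt_id' t).sub_const a).const_mul L).exp).const_mul δ).congr_deriv (by ring)
  have hstrict : ∀ t ∈ Ico a b, ‖η t - γ t‖ = δ * Real.exp (L * (t - a)) →
      ‖u t (η t) - u t (γ t)‖ < L * (δ * Real.exp (L * (t - a))) := by
    intro t ht hmeet
    have hmem : η t ∈ closedBall (γ t) r := by
      refine mem_closedBall_iff_norm.2 (hmeet.le.trans (le_trans ?_ hr))
      gcongr
      exact ht.2.le
    have hcenter : γ t ∈ closedBall (γ t) r :=
      mem_closedBall_self (dist_nonneg.trans hmem)
    calc ‖u t (η t) - u t (γ t)‖ ≤ K * ‖η t - γ t‖ := (hlip t ht).norm_sub_le hmem hcenter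
      _ < L * (δ * Real.exp (L * (t - a))) := by rw [hmeet]; gcongr
  intro t ht
  rw [dist_eq_norm]
  exact image_norm_le_of_norm_deriv_right_lt_deriv_boundary
    (fun t ht => (hdiff t ht).continuousWithinAt)
    (fun t ht => (hdiff t (Ico_subset_Icc_self ht)).mono_of_mem_nhdsWithin
      (Icc_mem_nhdsGE_of_mem ht))
    (by simpa [dist_eq_norm] using ha) hexp hstrict ht

theorem exists_Icc_norm_velocity_sub_le (hu : ContDiff ℝ 1 (uncurry u)) {γ : ℝ → E}
    (hγ : IsIntegralCurve γ u) (t₀ : ℝ) :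
    ∃ a b, t₀ ∈ Ioo a b ∧ ∃ ρ > 0, ∃ C : ℝ≥0, ∀ η, IsIntegralCurve η u →
      ∀ δ ∈ Ioc 0 ρ, dist (η a) (γ a) ≤ δ → ∀ t ∈ Icc a b, ‖u t (η t) - u t (γ t)‖ ≤ C * δ := by
  obtain ⟨K, r, hr, hlip⟩ := exists_eventually_lipschitzOnWith_closedBall hu.contDiffAt
    (hγ.continuous.continuousAt (x := t₀))
  obtain ⟨ε, hε, hball⟩ := nhds_basis_closedBall.eventually_iff.1 hlip
  rw [Real.closedBall_eq_Icc] at hball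
  set a := t₀ - ε
  set b := t₀ + ε
  set D : ℝ≥0 := ⟨Real.exp ((K + 1) * (b - a)), (Real.exp_pos _).le⟩
  have hD₀ : (0 : ℝ) < D := Real.exp_pos _
  refine ⟨a, b, ⟨sub_lt_self t₀ hε, lt_add_of_pos_right t₀ hε⟩, r / D, by positivity, K * D, ?_⟩
  rintro η hη δ ⟨hδ, hδr⟩ ha t ht
  have hδD : δ * D ≤ r := (le_div_iff₀ hD₀).1 hδr
  have hdist : dist (η t) (γ t) ≤ δ * D := calc
    dist (η t) (γ t) ≤ δ * Real.exp ((K + 1) * (t - a)) :=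
      dist_le_mul_exp_of_lipschitzOnWith_closedBall (lt_add_one (K : ℝ)) hδ
        (hγ.isIntegralCurveOn _) (hη.isIntegralCurveOn _)
        (fun s hs => hball (Ico_subset_Icc_self hs)) ha hδD t ht
    _ ≤ δ * Real.exp ((K + 1) * (b - a)) := by gcongr; exact ht.2
  calc ‖u t (η t) - u t (γ t)‖ ≤ K * ‖η t - γ t‖ :=
        (hball ht).norm_sub_le (hdist.trans hδD) (mem_closedBall_self hr.le)
    _ ≤ K * (δ * D) := by rw [← dist_eq_norm]; gcongr
    _ = (K * D : ℝ≥0) * δ := by push_cast; ring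

variable {φ : ℝ → E → E}

theorem exists_Icc_eventually_nnnorm_velocity_quotient_le (hu : ContDiff ℝ 1 (uncurry u))
    (hφ : ∀ X, IsIntegralCurve (φ · X) u) {X h : E}
    (hφX : ∀ t, LineDifferentiableAt ℝ (φ t) X h) (t₀ : ℝ) :
    ∃ a b, t₀ ∈ Ioo a b ∧ ∃ C : ℝ≥0, ∀ᶠ s : ℝ in 𝓝[≠] 0, ∀ t ∈ Icc a b,
      ‖s⁻¹ • (u t (φ t (X + s • h)) - u t (φ t X))‖₊ ≤ C := by
  obtain ⟨a, b, ht₀, ρ, hρ, C, hC⟩ := exists_Icc_norm_velocity_sub_le hu (hφ X) t₀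
  obtain ⟨B, hB, hinit⟩ := (hφX a).hasLineDerivAt.isBigO_sub.exists_pos
  lift B to ℝ≥0 using hB.le
  have hsmall : ∀ᶠ s : ℝ in 𝓝 0, B * |s| < ρ :=
    (by fun_prop : Continuous fun s : ℝ => B * |s|).continuousAt.eventually_lt_const (by simpa)
  refine ⟨a, b, ht₀, C * B, ?_⟩
  filter_upwards [nhdsWithin_le_nhds hinit.bound, nhdsWithin_le_nhds hsmall, self_mem_nhdsWithin]
    with s hs hsρ hs₀ t ht
  have hs_pos : 0 < |s| := abs_pos.2 hs₀
  have hvel := hC _ (hφ (X + s • h)) (B * |s|) ⟨by positivity, hsρ.le⟩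
    (by simpa [dist_eq_norm] using hs) t ht
  rw [← NNReal.coe_le_coe, coe_nnnorm, norm_smul, norm_inv, Real.norm_eq_abs,
    inv_mul_le_iff₀ hs_pos]
  exact hvel.trans_eq (by push_cast; ring)

variable [CompleteSpace E] {F : ℝ → E →L[ℝ] E} {X : E}

theorem hasDerivAt_fderiv_flow_apply (hu : ContDiff ℝ 1 (uncurry u))
    (hφ : ∀ X, IsIntegralCurve (φ · X) u) (hF : ∀ t, HasFDerivAt (φ t) (F t) X) (t₀ : ℝ) (h : E) :
    HasDerivAt (F · h) (fderiv ℝ (u t₀) (φ t₀ X) (F t₀ h)) t₀ := by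
  obtain ⟨a, b, ht₀, C, hbound⟩ := exists_Icc_eventually_nnnorm_velocity_quotient_le hu hφ
    (fun t => (hF t).hasLineDerivAt h |>.lineDifferentiableAt) t₀
  have hquot : ∀ s t : ℝ, HasDerivAt (fun t => s⁻¹ • (φ t (X + s • h) - φ t X))
      (s⁻¹ • (u t (φ t (X + s • h)) - u t (φ t X))) t :=
    fun s t => ((hφ (X + s • h) t).sub (hφ X t)).const_smul s⁻¹
  have hvel : ∀ Y, Continuous fun t => u t (φ t Y) :=
    fun Y => hu.continuous.comp (continuous_id.prodMk (hφ Y).continuous)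
  have hquot_lim : ∀ t, Tendsto (fun s : ℝ => s⁻¹ • (φ t (X + s • h) - φ t X)) (𝓝[≠] 0)
      (𝓝 (F t h)) := fun t => ((hF t).hasLineDerivAt h).tendsto_slope_zero
  have hvel_lim : ∀ t, Tendsto (fun s : ℝ => s⁻¹ • (u t (φ t (X + s • h)) - u t (φ t X)))
      (𝓝[≠] 0) (𝓝 (fderiv ℝ (u t) (φ t X) (F t h))) := fun t =>
    have hut := (hasFDerivAt_slice (hu.differentiable one_ne_zero (t, φ t X))).differentiableAt
    ((hut.hasFDerivAt.comp X (hF t)).hasLineDerivAt h).tendsto_slope_zero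
  have hF_cont : ContinuousOn (F · h) (Icc a b) :=
    (lipschitzOnWith_of_tendsto_of_nnnorm_deriv_le (fun s t _ => hquot s t) hbound
      fun t _ => hquot_lim t).continuousOn
  have hDu_cont : Continuous fun t => fderiv ℝ (u t) (φ t X) :=
    (continuous_fderiv_slice hu).comp (continuous_id.prodMk (hφ X).continuous)
  exact hasDerivAt_of_tendsto_of_nnnorm_deriv_le (fun s t _ => hquot s t)
    (fun s => (((hvel (X + s • h)).sub (hvel X)).const_smul s⁻¹).continuousOn) hbound
    (fun t _ => hquot_lim t) (fun t _ => hvel_lim t) (hDu_cont.continuousOn.clm_apply hF_cont) ht₀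

theorem hasDerivAt_fderiv_flow (hu : ContDiff ℝ 1 (uncurry u))
    (hφ : ∀ X, IsIntegralCurve (φ · X) u) (hF : ∀ t, HasFDerivAt (φ t) (F t) X) (t : ℝ) :
    HasDerivAt F (fderiv ℝ (u t) (φ t X) ∘L F t) t :=
  hasDerivAt_clm_of_forall_hasDerivAt_apply_comp
    ((continuous_fderiv_slice hu).comp (continuous_id.prodMk (hφ X).continuous))
    (hasDerivAt_fderiv_flow_apply hu hφ hF) t

end Flow

theorem hasDerivAt_units_inv_mul_mul {𝕜 R : Type*} [NontriviallyNormedField 𝕜] [NormedRing R]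
    [NormedAlgebra 𝕜 R] [HasSummableGeomSeries R] {P : 𝕜 → Rˣ} {N : 𝕜 → R} {A N' : R} {t : 𝕜}
    (hP : HasDerivAt (fun τ => (P τ : R)) (A * P t) t) (hN : HasDerivAt N N' t) :
    HasDerivAt (fun τ => ↑(P τ)⁻¹ * N τ * P τ)
      (↑(P t)⁻¹ * (N' + N t * A - A * N t) * P t) t := by
  have hinv : HasDerivAt (fun τ => (↑(P τ)⁻¹ : R)) (-(↑(P t)⁻¹ * A)) t := by
    simpa [Function.comp_def, mul_assoc] using
      (hasFDerivAt_ringInverse (𝕜 := 𝕜) (P t)).comp_hasDerivAt t hP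
  refine ((hinv.mul hN).mul hP).congr_deriv ?_
  simp only [Pi.mul_apply]
  noncomm_ring

section MixedTensor

variable {E : Type*} [NormedAddCommGroup E] [NormedSpace ℝ E]

/-- The Lie derivative `d_L M` along the velocity `u` of a time-dependent mixed (1,1)-tensor field,
encoded as a field of endomorphisms; the first two summands are its material derivative. -/
def mixedLieDeriv (u : ℝ → E → E) (M : ℝ → E → E →L[ℝ] E) (t : ℝ) (x : E) : E →L[ℝ] E :=
  deriv (fun τ => M τ x) t + fderiv ℝ (M t) x (u t x)
    + M t x ∘L fderiv ℝ (u t) x - fderiv ℝ (u t) x ∘L M t x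

/-- The pull-back of a mixed (1,1)-tensor field `M` under a map `φ` whose derivative is `F`. The
derivative is a separate argument so that it can be bundled as an equivalence. -/
def mixedPullback (φ : E → E) (F : E → E ≃L[ℝ] E) (M : E → E →L[ℝ] E) (X : E) : E →L[ℝ] E :=
  ((F X).symm : E →L[ℝ] E) ∘L M (φ X) ∘L (F X : E →L[ℝ] E)

theorem mixedPullback_id {F : E → E ≃L[ℝ] E} {M : E → E →L[ℝ] E} {X : E}
    (hF : HasFDerivAt id (F X : E →L[ℝ] E) X) : mixedPullback id F M X = M X := by
  have hFX : F X = .refl ℝ E :=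
    ContinuousLinearEquiv.coe_injective (hF.unique (hasFDerivAt_id X))
  ext x
  simp [mixedPullback, hFX]

theorem mixedPullback_eq_iff {φ : E → E} {F : E → E ≃L[ℝ] E} {M : E → E →L[ℝ] E} {X : E}
    {N : E →L[ℝ] E} :
    mixedPullback φ F M X = N ↔
      M (φ X) = ((F X : E →L[ℝ] E) ∘L N) ∘L ((F X).symm : E →L[ℝ] E) := by
  constructor
  · rintro rfl
    ext x
    simp [mixedPullback]
  · intro hM
    ext x
    simp [mixedPullback, hM]

theorem mixedPullback_eq_zero_iff {φ : E → E} {F : E → E ≃L[ℝ] E} {M : E → E →L[ℝ] E} {X : E} :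
    mixedPullback φ F M X = 0 ↔ M (φ X) = 0 := by
  rw [mixedPullback_eq_iff, ContinuousLinearMap.comp_zero, ContinuousLinearMap.zero_comp]

variable [CompleteSpace E] {u φ : ℝ → E → E} {F : ℝ → E → E ≃L[ℝ] E} {M : ℝ → E → E →L[ℝ] E}

theorem hasDerivAt_mixedPullback (hu : ContDiff ℝ 1 (uncurry u))
    (hφ : ∀ X, IsIntegralCurve (φ · X) u)
    (hF : ∀ t X, HasFDerivAt (φ t) (F t X : E →L[ℝ] E) X)
    (hM : Differentiable ℝ (uncurry M)) (t : ℝ) (X : E) :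
    HasDerivAt (fun τ => mixedPullback (φ τ) (F τ) (M τ) X)
      (mixedPullback (φ t) (F t) (mixedLieDeriv u M t) X) t :=
  hasDerivAt_units_inv_mul_mul (P := fun τ => (F τ X).toUnit)
    (hasDerivAt_fderiv_flow hu hφ (fun τ => hF τ X) t)
    (hasDerivAt_along_curve_s11 (hM (t, φ t X)) (hφ X t))

theorem mixed_tensor_moving_with_fluid_iff_general (hu : ContDiff ℝ 1 (uncurry u))
    (hφ₀ : ∀ X, φ 0 X = X) (hφ : ∀ X, IsIntegralCurve (φ · X) u) (hφsurj : ∀ t, Surjective (φ t))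
    (hF : ∀ t X, HasFDerivAt (φ t) (F t X : E →L[ℝ] E) X) (hM : Differentiable ℝ (uncurry M)) :
    (∀ t x, mixedLieDeriv u M t x = 0) ↔
      ∀ t X, M t (φ t X) = ((F t X : E →L[ℝ] E) ∘L M 0 X) ∘L ((F t X).symm : E →L[ℝ] E) := by
  have hpull := hasDerivAt_mixedPullback hu hφ hF hM
  have hφ₀_id : φ 0 = id := funext hφ₀
  have hpull₀ : ∀ X, mixedPullback (φ 0) (F 0) (M 0) X = M 0 X := fun X => by
    rw [hφ₀_id]
    exact mixedPullback_id (hφ₀_id ▸ hF 0 X)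
  calc (∀ t x, mixedLieDeriv u M t x = 0)
      ↔ ∀ t X, mixedPullback (φ t) (F t) (mixedLieDeriv u M t) X = 0 :=
        forall_congr' fun t => by rw [(hφsurj t).forall]; simp only [mixedPullback_eq_zero_iff]
    _ ↔ ∀ t X, mixedPullback (φ t) (F t) (M t) X = M 0 X := by
        refine ⟨fun hL t X => ?_, fun hconst t X => ?_⟩
        · exact (is_const_of_deriv_eq_zero (fun τ => (hpull τ X).differentiableAt)
            (fun τ => (hpull τ X).deriv.trans (hL τ X)) t 0).trans (hpull₀ X)
        · refine (hpull t X).unique ?_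
          simpa only [hconst] using hasDerivAt_const t (M 0 X)
    _ ↔ _ := forall₂_congr fun _ _ => mixedPullback_eq_iff

end MixedTensor

/-- A mixed (1,1)-tensor field is moving with the fluid iff it is
conjugate by `F` to a time-independent field on the reference space. -/
theorem mixed_tensor_moving_with_fluid_iff
    (u φ : ℝ → E3 → E3)
    (F : ℝ → E3 → (E3 ≃L[ℝ] E3))
    (hu : ContDiff ℝ (⊤ : ℕ∞) (Function.uncurry u))
    (hφ0 : ∀ X, φ 0 X = X)
    (hφt : ∀ t X, HasDerivAt (fun τ => φ τ X) (u t (φ t X)) t)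
    (hφsmooth : ∀ t, ContDiff ℝ (⊤ : ℕ∞) (φ t))
    (hφbij : ∀ t, Function.Bijective (φ t))
    (hφinv : ∀ t, ContDiff ℝ (⊤ : ℕ∞) (Function.invFun (φ t)))
    (hF : ∀ t X, (F t X : E3 →L[ℝ] E3) = fderiv ℝ (φ t) X)
    (M : ℝ → E3 → (E3 →L[ℝ] E3))
    (hM : ContDiff ℝ 1 (Function.uncurry M)) :
    (∀ t x, deriv (fun τ => M τ x) t + fderiv ℝ (M t) x (u t x)
        + (M t x).comp (fderiv ℝ (u t) x) - (fderiv ℝ (u t) x).comp (M t x) = 0) ↔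
      (∀ t X, M t (φ t X)
          = ((F t X : E3 →L[ℝ] E3).comp (M 0 X)).comp ((F t X).symm : E3 →L[ℝ] E3)) :=
  mixed_tensor_moving_with_fluid_iff_general (hu.of_le (by exact_mod_cast le_top)) hφ0
    (fun X t => hφt t X) (fun t => (hφbij t).surjective)
    (fun t X => hF t X ▸ ((hφsmooth t).differentiable (by simp) X).hasFDerivAt)
    (hM.differentiable one_ne_zero)
end
end
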